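/- arXiv:2511.13477 — 9 statements merged into one kernel-verified Lean document; each statement's English description precedes it below -/
import Mathlib

section
/- Let n, t, k be positive integers. If n < kt then Δ_{n,t}^{[k]} has no faces at all, and if n = kt then the only face of Δ_{n,t}^{[k]} is the empty set; in particular Δ_{n,t}^{[k]} has no nonempty faces when n ≤ kt. If n > kt, then Δ_{n,t}^{[k]} = Δ_t^λ, where λ = (λ_1, …, λ_{k+1}) is the partition with k+1 parts all equal to n − kt. -/
/-- The interval `{b, b+1, …, b+t-1}` (a `t`-path of the path graph, as a vertex set). -/
def pathInterval (b t : ℕ) : Finset ℕ := Finset.Icc b (b + t - 1)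

/-- `F` contains `k` pairwise disjoint intervals `{b, …, b+t-1} ⊆ [n]`. -/
def containsMatching (n t k : ℕ) (F : Finset ℕ) : Prop :=
  ∃ b : Fin k → ℕ,
    (∀ j, 1 ≤ b j ∧ b j + t - 1 ≤ n) ∧
    (∀ i j : Fin k, i ≠ j → Disjoint (pathInterval (b i) t) (pathInterval (b j) t)) ∧
    ∀ j, pathInterval (b j) t ⊆ F

/-- `Δ_{n,t}^{[k]}`, the Alexander dual of the Stanley–Reisner complex of the `k`-th
squarefree power of the `t`-path ideal of `P_n`: its faces are the sets `[n] ∖ F` where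
`F ⊆ [n]` contains `k` pairwise disjoint intervals of the form `{b, …, b+t-1} ⊆ [n]`. -/
def dualComplex (n t k : ℕ) : Set (Finset ℕ) :=
  { G | ∃ F : Finset ℕ, F ⊆ Finset.Icc 1 n ∧ containsMatching n t k F ∧
        G = Finset.Icc 1 n \ F }

/-- `lam` encodes (via the values `lam 1 ≥ lam 2 ≥ ⋯ ≥ lam r ≥ 1`) a partition
`λ = (λ_1 ≥ ⋯ ≥ λ_r ≥ 1)` with `r` parts. -/
def isPartition (r : ℕ) (lam : ℕ → ℕ) : Prop :=
  (∀ j, 1 ≤ j → j ≤ r → 1 ≤ lam j) ∧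
  ∀ j j', 1 ≤ j → j ≤ j' → j' ≤ r → lam j' ≤ lam j

/-- `a` is an entry of column `i` of the filled Young diagram of `λ`, i.e.
`a = (r - j)t + i` for some row `1 ≤ j ≤ r` with `λ_j ≥ i`. -/
def inColumn (t r : ℕ) (lam : ℕ → ℕ) (i a : ℕ) : Prop :=
  ∃ j, 1 ≤ j ∧ j ≤ r ∧ i ≤ lam j ∧ a = (r - j) * t + i

/-- The `t`-Young complex `Δ_t^λ`: the simplicial complex generated by the sets
`{a_1 < a_2 < ⋯ < a_{λ_1}}` where each `a_i` is a column-`i` entry of the filled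
Young diagram of `λ`. -/
def youngComplex (t r : ℕ) (lam : ℕ → ℕ) : Set (Finset ℕ) :=
  { F | ∃ a : ℕ → ℕ,
      (∀ i, 1 ≤ i → i < lam 1 → a i < a (i + 1)) ∧
      (∀ i, 1 ≤ i → i ≤ lam 1 → inColumn t r lam i (a i)) ∧
      F ⊆ Finset.image a (Finset.Icc 1 (lam 1)) }

/-- `G` is a facet (maximal face) of the complex `Δ`. -/
def isFacet (Δ : Set (Finset ℕ)) (G : Finset ℕ) : Prop :=
  G ∈ Δ ∧ ∀ G' ∈ Δ, G ⊆ G' → G' = G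

/-!
Put `m = n - kt` and consider lattice paths made of `m` unit steps and `k` long steps of length
`t`. Laid end to end, the steps of such a path tile `{1, …, n}`. The long steps are exactly the
families of `k` disjoint `t`-intervals, and the unit steps occupy exactly the generators of the
`t`-Young complex: the `i`-th unit step, preceded by `c` long steps, sits at `ct + i`, an entry of
column `i`. A path is determined by how many long steps precede each unit step, and equally by how
many unit steps precede each long step, so the two complexes have the same generators.
-/

open Finset

variable {n m k t : ℕ} {c d : ℕ → ℕ}

theorem exists_le_forall_lt_iff {p : ℕ → Prop} (hp : AntitoneOn p (Set.Iio m)) :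
    ∃ e ≤ m, ∀ i < m, (i < e ↔ p i) := by
  classical
  have h : ∃ e, e < m → ¬ p e := ⟨m, fun hm => absurd hm (lt_irrefl m)⟩
  refine ⟨Nat.find h, Nat.find_min' h fun hm => absurd hm (lt_irrefl m), fun i hi => ⟨?_, ?_⟩⟩
  · intro hlt
    by_contra hpi
    exact Nat.find_min h hlt fun _ => hpi
  · intro hpi
    by_contra! hle
    have hfind : Nat.find h < m := hle.trans_lt hi
    exact Nat.find_spec h hfind (hp hfind hi hle hpi)

/-- `c` and `d` describe the same lattice path with `m` horizontal and `k` vertical steps: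
`c i` vertical steps precede the horizontal step `i`, and `d j` horizontal steps precede the
vertical step `j`. Thus `fun j => m - d j` is the conjugate partition of `c`. Steps are numbered
from `0`, and only the values `c i` with `i < m` and `d j` with `j < k` matter. -/
structure IsConjugate (m k : ℕ) (c d : ℕ → ℕ) : Prop where
  left_le : ∀ i < m, c i ≤ k
  right_le : ∀ j < k, d j ≤ m
  lt_iff_le : ∀ i < m, ∀ j < k, (i < d j ↔ c i ≤ j)

namespace IsConjugate

theorem symm (h : IsConjugate m k c d) : IsConjugate k m d c where
  left_le := h.right_le
  right_le := h.left_le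
  lt_iff_le j hj i hi := by rw [← not_le, ← h.lt_iff_le i hi j hj, not_lt]

theorem monotoneOn_right (h : IsConjugate m k c d) : MonotoneOn d (Set.Iio k) := by
  intro j hj j' hj' hjj'
  refine le_of_forall_lt fun i hi => ?_
  have him : i < m := hi.trans_le (h.right_le j hj)
  exact (h.lt_iff_le i him j' hj').2 (((h.lt_iff_le i him j hj).1 hi).trans hjj')

theorem monotoneOn_left (h : IsConjugate m k c d) : MonotoneOn c (Set.Iio m) :=
  h.symm.monotoneOn_right

theorem exists_right (hc : MonotoneOn c (Set.Iio m)) (hck : ∀ i < m, c i ≤ k) :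
    ∃ d, IsConjugate m k c d := by
  have hex (j : ℕ) : ∃ e ≤ m, ∀ i < m, (i < e ↔ c i ≤ j) :=
    exists_le_forall_lt_iff fun _ hi _ hi' hii' hle => (hc hi hi' hii').trans hle
  choose d hdm hd using hex
  exact ⟨d, hck, fun j _ => hdm j, fun i hi j _ => hd j i hi⟩

theorem exists_left (hd : MonotoneOn d (Set.Iio k)) (hdm : ∀ j < k, d j ≤ m) :
    ∃ c, IsConjugate m k c d :=
  (exists_right hd hdm).imp fun _ h => h.symm

end IsConjugate

/-- The cells of `{1, 2, …}` covered by the `m` unit steps of a lattice path whose other steps have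
length `t`, where `c i` long steps precede the unit step `i`. -/
def unitCells (t m : ℕ) (c : ℕ → ℕ) : Finset ℕ :=
  (range m).image fun i => c i * t + (i + 1)

/-- The cells of `{1, 2, …}` covered by the `k` steps of length `t` of a lattice path whose other
steps are unit steps, where `d j` unit steps precede the long step `j`. -/
def blockCells (t k : ℕ) (d : ℕ → ℕ) : Finset ℕ :=
  (range k).biUnion fun j => pathInterval (j * t + d j + 1) t

theorem mem_pathInterval_succ {b x : ℕ} : x ∈ pathInterval (b + 1) t ↔ b < x ∧ x ≤ b + t := by
  rw [pathInterval, mem_Icc]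
  omega

theorem mul_add_le_mul_of_lt {i j : ℕ} (h : i < j) : i * t + t ≤ j * t := by
  rw [← Nat.add_one_mul]
  exact Nat.mul_le_mul_right t h

theorem strictMonoOn_unitCell (hc : MonotoneOn c (Set.Iio m)) :
    StrictMonoOn (fun i => c i * t + (i + 1)) (Set.Iio m) := fun _ hi _ hj hij =>
  add_lt_add_of_le_of_lt (Nat.mul_le_mul_right t (hc hi hj hij.le)) (Nat.succ_lt_succ hij)

theorem card_unitCells (hc : MonotoneOn c (Set.Iio m)) : #(unitCells t m c) = m := by
  rw [unitCells, card_image_of_injOn, card_range]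
  rw [coe_range]
  exact (strictMonoOn_unitCell hc).injOn

theorem unitCells_subset (hck : ∀ i < m, c i ≤ k) : unitCells t m c ⊆ Icc 1 (m + k * t) := by
  refine image_subset_iff.2 fun i hi => ?_
  rw [mem_range] at hi
  have := Nat.mul_le_mul_right t (hck i hi)
  rw [mem_Icc]
  omega

theorem pairwiseDisjoint_pathInterval (hd : MonotoneOn d (Set.Iio k)) :
    (Set.Iio k).PairwiseDisjoint fun j => pathInterval (j * t + d j + 1) t := by
  intro i hi j hj hij
  wlog hlt : i < j generalizing i j
  · exact (this hj hi hij.symm (hij.lt_or_gt.resolve_left hlt)).symm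
  have hdij := hd hi hj hlt.le
  have hmul := mul_add_le_mul_of_lt (t := t) hlt
  refine disjoint_left.2 fun x hxi hxj => ?_
  rw [mem_pathInterval_succ] at hxi hxj
  omega

theorem card_pathInterval_succ (b : ℕ) : #(pathInterval (b + 1) t) = t := by
  rw [pathInterval, Nat.card_Icc]
  omega

theorem card_blockCells (hd : MonotoneOn d (Set.Iio k)) : #(blockCells t k d) = k * t := by
  have hdisj := pairwiseDisjoint_pathInterval (t := t) hd
  rw [← coe_range] at hdisj
  rw [blockCells, card_biUnion hdisj]
  simp only [card_pathInterval_succ, sum_const, card_range, smul_eq_mul]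

theorem blockCells_subset (hdn : ∀ j < k, d j + k * t ≤ n) : blockCells t k d ⊆ Icc 1 n := by
  refine biUnion_subset.2 fun j hj x hx => ?_
  rw [mem_range] at hj
  have hmul := mul_add_le_mul_of_lt (t := t) hj
  have hdj := hdn j hj
  rw [mem_pathInterval_succ] at hx
  rw [mem_Icc]
  omega

namespace IsConjugate

theorem disjoint_cells (h : IsConjugate m k c d) :
    Disjoint (unitCells t m c) (blockCells t k d) := by
  simp only [unitCells, blockCells, disjoint_left, forall_mem_image, mem_biUnion, mem_range,
    not_exists, not_and, mem_pathInterval_succ]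
  intro i hi j hj hlt
  have hij := h.lt_iff_le i hi j hj
  rcases le_or_gt (c i) j with hle | hgt
  · have hmul := Nat.mul_le_mul_right t hle
    omega
  · have hmul := mul_add_le_mul_of_lt (t := t) hgt
    omega

theorem sdiff_blockCells (h : IsConjugate m k c d) :
    Icc 1 (m + k * t) \ blockCells t k d = unitCells t m c := by
  have hblock : blockCells t k d ⊆ Icc 1 (m + k * t) :=
    blockCells_subset fun j hj => Nat.add_le_add_right (h.right_le j hj) _
  -- Only the inclusion `⊇` has to be checked, as both sides have `m` elements.
  refine (eq_of_subset_of_card_le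
    (subset_sdiff.2 ⟨unitCells_subset h.left_le, h.disjoint_cells⟩) ?_).symm
  rw [card_sdiff_of_subset hblock, card_blockCells h.monotoneOn_right,
    card_unitCells h.monotoneOn_left, Nat.card_Icc]
  omega

end IsConjugate

theorem containsMatching.exists_ordered {F : Finset ℕ} (h : containsMatching n t k F) :
    ∃ b : ℕ → ℕ, (∀ j < k, 1 ≤ b j ∧ b j + t ≤ n + 1 ∧ pathInterval (b j) t ⊆ F) ∧
      ∀ j, j + 1 < k → b j + t ≤ b (j + 1) := by
  obtain ⟨b, hbn, hdisj, hbF⟩ := h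
  let σ := Tuple.sort b
  have hmono : Monotone (b ∘ σ) := Tuple.monotone_sort b
  obtain ⟨b', hb'⟩ : ∃ b' : ℕ → ℕ, ∀ j : Fin k, b' j = b (σ j) :=
    ⟨Function.extend Fin.val (b ∘ σ) 0, Fin.val_injective.extend_apply (b ∘ σ) 0⟩
  refine ⟨b', fun j hj => ?_, fun j hj => ?_⟩
  · rw [hb' ⟨j, hj⟩]
    obtain ⟨hpos, hend⟩ := hbn (σ ⟨j, hj⟩)
    exact ⟨hpos, by omega, hbF _⟩
  · rw [hb' ⟨j, by omega⟩, hb' ⟨j + 1, hj⟩]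
    set i : Fin k := ⟨j, by omega⟩
    set i' : Fin k := ⟨j + 1, hj⟩
    have hlt : i < i' := Nat.lt_succ_self j
    have hle : b (σ i) ≤ b (σ i') := hmono hlt.le
    by_contra! hgt
    have hmem : b (σ i') ∈ pathInterval (b (σ i)) t := mem_Icc.2 ⟨hle, by omega⟩
    have hmem' : b (σ i') ∈ pathInterval (b (σ i')) t := mem_Icc.2 ⟨le_rfl, by omega⟩
    exact disjoint_left.1 (hdisj _ _ (σ.injective.ne hlt.ne)) hmem hmem'

theorem exists_monotoneOn_eq_mul_add {b : ℕ → ℕ} (hpos : 0 < k → 1 ≤ b 0)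
    (hgap : ∀ j, j + 1 < k → b j + t ≤ b (j + 1)) :
    ∃ d : ℕ → ℕ, MonotoneOn d (Set.Iio k) ∧ ∀ j < k, b j = j * t + d j + 1 := by
  have hlow : ∀ j < k, j * t + 1 ≤ b j := by
    intro j
    induction j with
    | zero => simpa only [zero_mul, zero_add] using hpos
    | succ j ih =>
      intro hj
      have := ih (Nat.lt_of_succ_lt hj)
      have := hgap j hj
      rw [Nat.add_one_mul]
      omega
  refine ⟨fun j => b j - (j * t + 1), ?_, fun j hj => ?_⟩
  · refine monotoneOn_of_le_add_one Set.ordConnected_Iio fun j _ _ hj => ?_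
    have := hgap j hj
    simp only [Nat.add_one_mul]
    omega
  · dsimp only
    have := hlow j hj
    omega

theorem containsMatching.exists_blockCells_subset {F : Finset ℕ} (h : containsMatching n t k F) :
    ∃ d : ℕ → ℕ, MonotoneOn d (Set.Iio k) ∧ (∀ j < k, d j + k * t ≤ n) ∧
      blockCells t k d ⊆ F := by
  obtain ⟨b, hb, hgap⟩ := h.exists_ordered
  obtain ⟨d, hd, hbd⟩ := exists_monotoneOn_eq_mul_add (fun hk => (hb 0 hk).1) hgap
  refine ⟨d, hd, fun j hj => ?_, biUnion_subset.2 fun j hj => ?_⟩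
  · obtain ⟨l, rfl⟩ := Nat.exists_eq_add_of_lt (Nat.zero_lt_of_lt hj)
    rw [zero_add] at hj hd hb hbd ⊢
    have hlast : l < l + 1 := Nat.lt_succ_self l
    have hle : d j ≤ d l := hd hj hlast (Nat.le_of_lt_succ hj)
    have hend : b l + t ≤ n + 1 := (hb l hlast).2.1
    rw [hbd l hlast] at hend
    rw [Nat.add_one_mul]
    omega
  · rw [mem_range] at hj
    rw [← hbd j hj]
    exact (hb j hj).2.2

theorem containsMatching_of_blockCells_subset {F : Finset ℕ} (hd : MonotoneOn d (Set.Iio k))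
    (hdn : ∀ j < k, d j + k * t ≤ n) (hF : blockCells t k d ⊆ F) : containsMatching n t k F := by
  refine ⟨fun j => j * t + d j + 1, fun j => ?_, fun i j hij => ?_, fun j => ?_⟩
  · have hmul := mul_add_le_mul_of_lt (t := t) j.isLt
    have hdj := hdn j j.isLt
    dsimp only
    omega
  · exact pairwiseDisjoint_pathInterval hd i.isLt j.isLt (Fin.val_injective.ne hij)
  · exact biUnion_subset.1 hF j (mem_range.2 j.isLt)

theorem mem_dualComplex_iff {G : Finset ℕ} :
    G ∈ dualComplex n t k ↔
      ∃ d : ℕ → ℕ, MonotoneOn d (Set.Iio k) ∧ (∀ j < k, d j + k * t ≤ n) ∧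
        G ⊆ Icc 1 n \ blockCells t k d := by
  constructor
  · rintro ⟨F, -, hF, rfl⟩
    obtain ⟨d, hd, hdn, hdF⟩ := hF.exists_blockCells_subset
    exact ⟨d, hd, hdn, sdiff_subset_sdiff subset_rfl hdF⟩
  · rintro ⟨d, hd, hdn, hG⟩
    obtain ⟨hGn, hGd⟩ := subset_sdiff.1 hG
    refine ⟨Icc 1 n \ G, sdiff_subset, ?_, (Finset.sdiff_sdiff_eq_self hGn).symm⟩
    exact containsMatching_of_blockCells_subset hd hdn
      (subset_sdiff.2 ⟨blockCells_subset hdn, hGd.symm⟩)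

theorem dualComplex_eq_empty (h : n < k * t) : dualComplex n t k = ∅ := by
  refine Set.eq_empty_of_forall_notMem fun G hG => ?_
  obtain ⟨d, -, hdn, -⟩ := mem_dualComplex_iff.1 hG
  have hk : 0 < k := Nat.pos_of_mul_pos_right (n.zero_le.trans_lt h)
  have := hdn 0 hk
  omega

theorem inColumn_const_iff {i a : ℕ} :
    inColumn t (k + 1) (fun _ => m) i a ↔ i ≤ m ∧ ∃ c ≤ k, a = c * t + i := by
  constructor
  · rintro ⟨j, hj, -, him, rfl⟩
    exact ⟨him, k + 1 - j, by omega, rfl⟩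
  · rintro ⟨him, c, hck, rfl⟩
    exact ⟨k + 1 - c, by omega, by omega, him, by rw [Nat.sub_sub_self (by omega)]⟩

theorem image_Icc_one (a : ℕ → ℕ) (m : ℕ) :
    (Icc 1 m).image a = (range m).image fun i => a (i + 1) := by
  rw [range_eq_Ico, ← Ico_add_one_right_eq_Icc, ← zero_add 1, ← image_add_right_Ico,
    image_image]
  rfl

theorem mem_youngComplex_const_iff (ht : 1 ≤ t) {G : Finset ℕ} :
    G ∈ youngComplex t (k + 1) (fun _ => m) ↔
      ∃ c : ℕ → ℕ, MonotoneOn c (Set.Iio m) ∧ (∀ i < m, c i ≤ k) ∧ G ⊆ unitCells t m c := by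
  constructor
  · rintro ⟨a, ha, hcol, hG⟩
    have hrow : ∀ i < m, ∃ c ≤ k, a (i + 1) = c * t + (i + 1) := fun i hi =>
      (inColumn_const_iff.1 (hcol (i + 1) (Nat.le_add_left 1 i) hi)).2
    choose! c hck hac using hrow
    refine ⟨c, monotoneOn_of_le_add_one Set.ordConnected_Iio fun i _ hi hi' => ?_, hck, ?_⟩
    · have hlt := ha (i + 1) (Nat.le_add_left 1 i) hi'
      rw [hac i hi, hac (i + 1) hi'] at hlt
      exact Nat.le_of_mul_le_mul_right (by omega) ht
    · rw [image_Icc_one] at hG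
      exact hG.trans (image_congr fun i hi => hac i (mem_range.1 hi)).subset
  · rintro ⟨c, hc, hck, hG⟩
    refine ⟨fun i => c (i - 1) * t + i, fun i hi him => ?_, fun i hi him => ?_, ?_⟩
    · obtain ⟨i, rfl⟩ := Nat.exists_eq_add_of_le' hi
      exact strictMonoOn_unitCell hc (Nat.lt_of_succ_lt him) him (Nat.lt_succ_self i)
    · exact inColumn_const_iff.2 ⟨him, c (i - 1), hck _ (Nat.sub_one_lt_of_le hi him), rfl⟩
    · rw [image_Icc_one]
      exact hG

theorem youngComplex_const_zero (t r : ℕ) : youngComplex t r (fun _ => 0) = {∅} := by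
  ext F
  simp only [youngComplex, inColumn, Set.mem_ofPred_eq, Set.mem_singleton_iff]
  constructor
  · rintro ⟨a, -, -, hF⟩
    exact subset_empty.1 hF
  · rintro rfl
    exact ⟨id, fun i _ hi => absurd hi i.not_lt_zero,
      fun i hi hi' => absurd (hi.trans hi') (Nat.not_succ_le_zero 0), empty_subset _⟩

theorem dualComplex_add_mul_eq_youngComplex (m k : ℕ) (ht : 1 ≤ t) :
    dualComplex (m + k * t) t k = youngComplex t (k + 1) (fun _ => m) := by
  ext G
  simp only [mem_dualComplex_iff, mem_youngComplex_const_iff ht, Nat.add_le_add_iff_right]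
  constructor
  · rintro ⟨d, hd, hdm, hG⟩
    obtain ⟨c, hcd⟩ := IsConjugate.exists_left hd hdm
    exact ⟨c, hcd.monotoneOn_left, hcd.left_le, hcd.sdiff_blockCells ▸ hG⟩
  · rintro ⟨c, hc, hck, hG⟩
    obtain ⟨d, hcd⟩ := IsConjugate.exists_right hc hck
    exact ⟨d, hcd.monotoneOn_right, hcd.right_le, hcd.sdiff_blockCells.symm ▸ hG⟩

/-- If `n < kt` then `Δ_{n,t}^{[k]}` has no faces; if `n = kt` its only face is `∅`;
and if `n > kt` then `Δ_{n,t}^{[k]} = Δ_t^λ` for the partition `λ` with `k+1` parts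
all equal to `n - kt`. -/
theorem dualComplex_eq_youngComplex (n t k : ℕ) (hn : 1 ≤ n) (ht : 1 ≤ t) (hk : 1 ≤ k) :
    (n < k * t → dualComplex n t k = ∅) ∧
    (n = k * t → dualComplex n t k = {∅}) ∧
    (k * t < n →
      dualComplex n t k = youngComplex t (k + 1) (fun _ => n - k * t)) := by
  refine ⟨dualComplex_eq_empty, ?_, fun hlt => ?_⟩
  · rintro rfl
    rw [← youngComplex_const_zero t (k + 1), ← dualComplex_add_mul_eq_youngComplex 0 k ht, zero_add]
  · obtain ⟨m, rfl⟩ := Nat.exists_eq_add_of_le' hlt.le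
    rw [Nat.add_sub_cancel, dualComplex_add_mul_eq_youngComplex m k ht]
end

section
/- Let n, t, k be positive integers with n > kt. A subset G ⊆ [n] is a facet (maximal face) of Δ_{n,t}^{[k]} if and only if [n]∖G is a union of k pairwise disjoint intervals of the form {b, b+1, …, b+t−1} ⊆ [n]; in particular every facet of Δ_{n,t}^{[k]} has cardinality n − kt. -/
/-!
The faces of `Δ_{n,t}^{[k]}` are the complements in `[n]` of the sets that contain the vertex set of
`k` disjoint `t`-paths. Complementation reverses inclusion, so the facets are the complements of the
minimal such sets. All these vertex sets have `kt` elements, hence form an antichain, and the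
minimal sets containing one of them are exactly the vertex sets themselves.
-/

theorem maximal_le_and_sdiff_iff {α : Type*} [GeneralizedBooleanAlgebra α] {P : α → Prop}
    {v x : α} : Maximal (fun y ↦ y ≤ v ∧ P (v \ y)) x ↔ x ≤ v ∧ Minimal P (v \ x) := by
  constructor
  · rintro ⟨⟨hxv, hPx⟩, hmax⟩
    refine ⟨hxv, hPx, fun y hPy hyx ↦ ?_⟩
    have hyv : v \ (v \ y) = y := sdiff_sdiff_eq_self (hyx.trans sdiff_le)
    have hxy : x ≤ v \ y := le_sdiff.2 ⟨hxv, disjoint_sdiff_self_right.mono_right hyx⟩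
    exact sdiff_le_comm.1 (hmax ⟨sdiff_le, hyv.symm ▸ hPy⟩ hxy)
  · rintro ⟨hxv, hPx, hmin⟩
    refine ⟨⟨hxv, hPx⟩, fun y ⟨hyv, hPy⟩ hxy ↦ ?_⟩
    exact (sdiff_le_sdiff_iff_le hxv hyv).1 (hmin hPy (sdiff_le_sdiff_left hxy))

theorem isFacet_iff_maximal {Δ : Set (Finset ℕ)} {G : Finset ℕ} :
    isFacet Δ G ↔ Maximal (· ∈ Δ) G := by
  simp only [isFacet, maximal_iff, eq_comm]

theorem card_pathInterval {b : ℕ} (hb : 1 ≤ b) (t : ℕ) : (pathInterval b t).card = t := by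
  rw [pathInterval, Nat.card_Icc]
  omega

/-- The vertex sets of the `k`-matchings of `t`-paths in `P_n`, that is, the supports of the minimal
generators of the `k`-th squarefree power of the `t`-path ideal. A matching is encoded by the family
of left endpoints of its paths. -/
def pathMatchings (n t k : ℕ) : Set (Finset ℕ) :=
  { M | ∃ b : Fin k → ℕ,
      (∀ j, 1 ≤ b j ∧ b j + t - 1 ≤ n) ∧
      (∀ i j : Fin k, i ≠ j → Disjoint (pathInterval (b i) t) (pathInterval (b j) t)) ∧
      M = Finset.univ.biUnion fun j ↦ pathInterval (b j) t }

section

variable {n t k : ℕ} {G : Finset ℕ}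

theorem sized_pathMatchings : (pathMatchings n t k).Sized (k * t) := by
  rintro _ ⟨b, hb, hdisj, rfl⟩
  rw [Finset.card_biUnion fun i _ j _ hij ↦ hdisj i j hij]
  simp [card_pathInterval (hb _).1]

theorem containsMatching_iff_mem_upperClosure {F : Finset ℕ} :
    containsMatching n t k F ↔ F ∈ upperClosure (pathMatchings n t k) := by
  rw [mem_upperClosure]
  constructor
  · rintro ⟨b, hb, hdisj, hsub⟩
    exact ⟨_, ⟨b, hb, hdisj, rfl⟩, Finset.biUnion_subset.2 fun j _ ↦ hsub j⟩
  · rintro ⟨_, ⟨b, hb, hdisj, rfl⟩, hsub⟩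
    exact ⟨b, hb, hdisj, fun j ↦ Finset.biUnion_subset.1 hsub j (Finset.mem_univ j)⟩

theorem minimal_containsMatching_iff {F : Finset ℕ} :
    Minimal (containsMatching n t k) F ↔ F ∈ pathMatchings n t k := by
  have hupper : containsMatching n t k = (· ∈ upperClosure (pathMatchings n t k)) :=
    funext fun _ ↦ propext containsMatching_iff_mem_upperClosure
  rw [hupper]
  exact sized_pathMatchings.isAntichain.minimal_mem_upperClosure_iff_mem

theorem mem_dualComplex_iff_s6 :
    G ∈ dualComplex n t k ↔
      G ⊆ Finset.Icc 1 n ∧ containsMatching n t k (Finset.Icc 1 n \ G) := by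
  constructor
  · rintro ⟨F, hF, hmatch, rfl⟩
    exact ⟨Finset.sdiff_subset, by rwa [Finset.sdiff_sdiff_eq_self hF]⟩
  · rintro ⟨hG, hmatch⟩
    exact ⟨_, Finset.sdiff_subset, hmatch, (Finset.sdiff_sdiff_eq_self hG).symm⟩

theorem isFacet_dualComplex_iff_sdiff_mem_pathMatchings :
    isFacet (dualComplex n t k) G ↔
      G ⊆ Finset.Icc 1 n ∧ Finset.Icc 1 n \ G ∈ pathMatchings n t k := by
  simp only [isFacet_iff_maximal, mem_dualComplex_iff_s6,
    maximal_le_and_sdiff_iff, minimal_containsMatching_iff]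

theorem card_eq_of_isFacet_dualComplex (hG : isFacet (dualComplex n t k) G) :
    G.card = n - k * t := by
  obtain ⟨hGn, hmem⟩ := isFacet_dualComplex_iff_sdiff_mem_pathMatchings.1 hG
  have hcard : (Finset.Icc 1 n \ G).card = k * t := sized_pathMatchings hmem
  have hsum := Finset.card_sdiff_add_card_eq_card hGn
  rw [hcard, Nat.card_Icc] at hsum
  omega

end

/-- For `n > kt`, a subset `G ⊆ [n]` is a facet of `Δ_{n,t}^{[k]}` iff `[n] ∖ G` is a
union of `k` pairwise disjoint intervals `{b, …, b+t-1} ⊆ [n]`; in particular every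
facet has cardinality `n - kt`. -/
theorem isFacet_dualComplex_iff (n t k : ℕ) (hn : 1 ≤ n) (ht : 1 ≤ t) (hk : 1 ≤ k)
    (hkt : k * t < n) (G : Finset ℕ) (hG : G ⊆ Finset.Icc 1 n) :
    (isFacet (dualComplex n t k) G ↔
      ∃ b : Fin k → ℕ,
        (∀ j, 1 ≤ b j ∧ b j + t - 1 ≤ n) ∧
        (∀ i j : Fin k, i ≠ j →
          Disjoint (pathInterval (b i) t) (pathInterval (b j) t)) ∧
        Finset.Icc 1 n \ G = Finset.univ.biUnion (fun j => pathInterval (b j) t)) ∧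
    (isFacet (dualComplex n t k) G → G.card = n - k * t) := by
  exact ⟨isFacet_dualComplex_iff_sdiff_mem_pathMatchings.trans (and_iff_right hG),
    card_eq_of_isFacet_dualComplex⟩
end

section
/- For every integer t ≥ 1 and every partition λ = (λ_1 ≥ λ_2 ≥ ⋯ ≥ λ_r ≥ 1), the 1-Young complex Δ_1^λ is vertex-decomposable. -/
/-- The deletion `del_Δ(v) = {F ∈ Δ : v ∉ F}`. -/
def delC (Δ : Set (Finset ℕ)) (v : ℕ) : Set (Finset ℕ) := { F | F ∈ Δ ∧ v ∉ F }

/-- The link `lk_Δ(v) = {F ∈ Δ : v ∉ F and F ∪ {v} ∈ Δ}`. -/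
def linkC (Δ : Set (Finset ℕ)) (v : ℕ) : Set (Finset ℕ) :=
  { F | F ∈ Δ ∧ v ∉ F ∧ insert v F ∈ Δ }

/-- A finite simplicial complex is vertex-decomposable if it is `{∅}`, or a simplex,
or it has a shedding vertex `v` (a vertex such that every facet of `del_Δ(v)` is a
facet of `Δ`) with both `lk_Δ(v)` and `del_Δ(v)` vertex-decomposable. -/
inductive VertexDecomposable : Set (Finset ℕ) → Prop
  | empty : VertexDecomposable {∅}
  | simplex (S : Finset ℕ) : VertexDecomposable { F | F ⊆ S }
  | shed (Δ : Set (Finset ℕ)) (v : ℕ) :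
      {v} ∈ Δ →
      (∀ G, isFacet (delC Δ v) G → isFacet Δ G) →
      VertexDecomposable (linkC Δ v) →
      VertexDecomposable (delC Δ v) →
      VertexDecomposable Δ

/-!
Only one property of the columns matters: for `t = 1` each of them is an interval of integers.
Let `A₁, A₂, …` be order-convex sets of integers and let `Δ(m, n)` be the complex generated by the
sets `{a₁ < ⋯ < a_m}` with `a_i ∈ A_i` and `a_m < n`. Splitting according to whether `a_{m+1} = n`,
if `n ∈ A_{m+1}` then `Δ(m+1, n+1)` is the union of `Δ(m+1, n)` and the cone with apex `n` over
`Δ(m, n)`; otherwise `Δ(m+1, n+1) = Δ(m+1, n)`. If `Δ(m+1, n)` has no face, only the cone remains,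
and cones preserve vertex-decomposability. If it has one, convexity and an exchange argument show
`Δ(m, n) ⊆ Δ(m+1, n)`, so that `Δ(m, n)` and `Δ(m+1, n)` are the link and the deletion of `n`; as
all facets of `Δ(m+1, n)` have `m + 1` elements, `n` is a shedding vertex. One concludes by
induction on `n`.
-/

section Cone

variable {Δ Γ : Set (Finset ℕ)} {v w : ℕ} {F G : Finset ℕ}

/-- The cone over `Δ` with apex `v`; this is the usual notion when `v` lies in no face of `Δ`. It
describes the faces `F` of a complex for which `F ∪ {v}` is also a face. -/
def coneC (v : ℕ) (Δ : Set (Finset ℕ)) : Set (Finset ℕ) := { F | F.erase v ∈ Δ }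

theorem mem_coneC : F ∈ coneC v Δ ↔ F.erase v ∈ Δ := Iff.rfl

theorem mem_coneC_of_notMem (hv : v ∉ F) : F ∈ coneC v Δ ↔ F ∈ Δ := by
  rw [mem_coneC, Finset.erase_eq_of_notMem hv]

theorem insert_mem_coneC (hv : v ∉ F) : insert v F ∈ coneC v Δ ↔ F ∈ Δ := by
  rw [mem_coneC, Finset.erase_insert hv]

theorem coneC_simplex (v : ℕ) (S : Finset ℕ) :
    coneC v { F | F ⊆ S } = { F | F ⊆ insert v S } :=
  Set.ext fun _ => Finset.subset_insert_iff.symm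

theorem delC_coneC (hwv : w ≠ v) : delC (coneC v Δ) w = coneC v (delC Δ w) := by
  ext F
  simp [delC, coneC, hwv]

theorem linkC_coneC (hwv : w ≠ v) : linkC (coneC v Δ) w = coneC v (linkC Δ w) := by
  ext F
  simp only [linkC, coneC, Set.mem_ofPred_eq, Finset.mem_erase, ne_eq, hwv, not_false_eq_true,
    true_and, Finset.erase_insert_of_ne hwv]

theorem isFacet_coneC_iff (hv : ∀ F ∈ Δ, v ∉ F) :
    isFacet (coneC v Δ) G ↔ v ∈ G ∧ isFacet Δ (G.erase v) := by
  constructor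
  · rintro ⟨hG, hmax⟩
    have hvG : v ∈ G := by
      have hins : insert v G = G :=
        hmax _ (by rwa [mem_coneC, Finset.erase_insert_eq_erase]) (Finset.subset_insert v G)
      exact hins ▸ Finset.mem_insert_self v G
    refine ⟨hvG, hG, fun H hH hGH => ?_⟩
    have hins : insert v H = G :=
      hmax _ ((insert_mem_coneC (hv H hH)).2 hH) (Finset.subset_insert_iff.2 hGH)
    rw [← hins, Finset.erase_insert (hv H hH)]
  · rintro ⟨hvG, hG, hmax⟩
    refine ⟨hG, fun H hH hGH => ?_⟩
    rw [← Finset.insert_erase (hGH hvG), hmax _ hH (Finset.erase_subset_erase v hGH),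
      Finset.insert_erase hvG]

theorem VertexDecomposable.empty_mem (h : VertexDecomposable Δ) : ∅ ∈ Δ := by
  induction h with
  | empty => exact rfl
  | simplex S => exact Finset.empty_subset S
  | shed _ _ _ _ _ _ _ hdel => exact hdel.1

theorem vertexDecomposable_coneC (h : VertexDecomposable Δ) (hv : ∀ F ∈ Δ, v ∉ F) :
    VertexDecomposable (coneC v Δ) := by
  induction h with
  | empty =>
    have hempty : ({∅} : Set (Finset ℕ)) = { F | F ⊆ ∅ } :=
      Set.ext fun _ => Finset.subset_empty.symm
    rw [hempty, coneC_simplex]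
    exact .simplex _
  | simplex S =>
    rw [coneC_simplex]
    exact .simplex _
  | shed Δ w hw hshed _ _ ihlink ihdel =>
    have hvw : v ∉ ({w} : Finset ℕ) := hv _ hw
    have hwv : w ≠ v := fun h => hvw (Finset.mem_singleton.2 h.symm)
    refine .shed _ w ((mem_coneC_of_notMem hvw).2 hw) (fun G hG => ?_) ?_ ?_
    · rw [delC_coneC hwv, isFacet_coneC_iff fun F hF => hv F hF.1] at hG
      exact (isFacet_coneC_iff hv).2 ⟨hG.1, hshed _ hG.2⟩
    · rw [linkC_coneC hwv]
      exact ihlink fun F hF => hv F hF.1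
    · rw [delC_coneC hwv]
      exact ihdel fun F hF => hv F hF.1

theorem delC_union_coneC (hv : ∀ F ∈ Δ, v ∉ F) (hΓΔ : Γ ⊆ Δ) :
    delC (Δ ∪ coneC v Γ) v = Δ := by
  ext F
  constructor
  · rintro ⟨hF | hF, hvF⟩
    · exact hF
    · exact hΓΔ ((mem_coneC_of_notMem hvF).1 hF)
  · exact fun hF => ⟨Or.inl hF, hv F hF⟩

theorem linkC_union_coneC (hv : ∀ F ∈ Δ, v ∉ F) (hΓΔ : Γ ⊆ Δ) :
    linkC (Δ ∪ coneC v Γ) v = Γ := by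
  ext F
  constructor
  · rintro ⟨-, hvF, hF | hF⟩
    · exact absurd (Finset.mem_insert_self v F) (hv _ hF)
    · exact (insert_mem_coneC hvF).1 hF
  · intro hF
    have hvF : v ∉ F := hv F (hΓΔ hF)
    exact ⟨Or.inl (hΓΔ hF), hvF, Or.inr ((insert_mem_coneC hvF).2 hF)⟩

theorem isFacet_union_coneC (hv : ∀ F ∈ Δ, v ∉ F) (hΓΔ : Γ ⊆ Δ) (hG : isFacet Δ G)
    (hGΓ : G ∉ Γ) : isFacet (Δ ∪ coneC v Γ) G := by
  refine ⟨Or.inl hG.1, ?_⟩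
  rintro H (hH | hH) hGH
  · exact hG.2 H hH hGH
  · have hHG : H.erase v = G :=
      hG.2 _ (hΓΔ hH) (Finset.subset_erase.2 ⟨hGH, hv G hG.1⟩)
    exact absurd (hHG ▸ hH) hGΓ

theorem vertexDecomposable_union_coneC (hΔ : VertexDecomposable Δ) (hΓ : VertexDecomposable Γ)
    (hv : ∀ F ∈ Δ, v ∉ F) (hΓΔ : Γ ⊆ Δ) (hfacet : ∀ G, isFacet Δ G → G ∉ Γ) :
    VertexDecomposable (Δ ∪ coneC v Γ) := by
  refine .shed _ v (Or.inr ?_) (fun G hG => ?_) ?_ ?_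
  · exact (insert_mem_coneC (Finset.notMem_empty v)).2 hΓ.empty_mem
  · rw [delC_union_coneC hv hΓΔ] at hG
    exact isFacet_union_coneC hv hΓΔ hG (hfacet G hG)
  · rwa [linkC_union_coneC hv hΓΔ]
  · rwa [delC_union_coneC hv hΓΔ]

end Cone

section Transversal

variable {α : Type*} [LinearOrder α] {A : ℕ → Set α} {m : ℕ} {B C : Finset α}

/-- `B = {a₁ < ⋯ < a_m}` with `a_i ∈ A i` for `1 ≤ i ≤ m`, i.e. `B` is an increasing transversal of
`A 1, …, A m`, built by adjoining its largest element last. The index of `A` starts at `1`. -/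
inductive IsIncTransversal (A : ℕ → Set α) : ℕ → Finset α → Prop
  | empty : IsIncTransversal A 0 ∅
  | snoc {m : ℕ} {B : Finset α} {x : α} :
      IsIncTransversal A m B → x ∈ A (m + 1) → (∀ b ∈ B, b < x) →
      IsIncTransversal A (m + 1) (insert x B)

theorem IsIncTransversal.card_eq (h : IsIncTransversal A m B) : B.card = m := by
  induction h with
  | empty => rfl
  | snoc _ _ hlt ih => rw [Finset.card_insert_of_notMem fun hx => (hlt _ hx).false, ih]

theorem IsIncTransversal.exists_strictMonoOn [Nonempty α] (h : IsIncTransversal A m B) :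
    ∃ a : ℕ → α, StrictMonoOn a (Set.Icc 1 m) ∧ (∀ i ∈ Set.Icc 1 m, a i ∈ A i) ∧
      B = (Finset.Icc 1 m).image a := by
  induction h with
  | empty => exact ⟨fun _ => Classical.arbitrary α, by simp [StrictMonoOn]⟩
  | @snoc m B x _ hx hlt ih =>
    obtain ⟨a, hmono, hmem, rfl⟩ := ih
    set a' := Function.update a (m + 1) x
    have hlast : a' (m + 1) = x := Function.update_self ..
    have heq : Set.EqOn a a' (Set.Icc 1 m) := fun i hi =>
      (Function.update_of_ne (Nat.lt_succ_of_le hi.2).ne _ _).symm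
    have himage : (Finset.Icc 1 m).image a' = (Finset.Icc 1 m).image a :=
      Finset.image_congr fun i hi => (heq (by simpa using hi)).symm
    refine ⟨a', ?_, ?_, ?_⟩
    · rw [← Set.insert_Icc_right_eq_Icc_add_one m.succ_pos,
        strictMonoOn_insert_iff_of_forall_le fun i hi => hi.2.trans m.le_succ]
      refine ⟨fun i hi _ => ?_, hmono.congr heq⟩
      rw [hlast, ← heq hi]
      exact hlt _ (Finset.mem_image_of_mem a (Finset.mem_Icc.2 hi))
    · rw [← Set.insert_Icc_right_eq_Icc_add_one m.succ_pos, Set.forall_mem_insert]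
      exact ⟨hlast ▸ hx, fun i hi => heq hi ▸ hmem i hi⟩
    · rw [← Finset.insert_Icc_right_eq_Icc_add_one m.succ_pos, Finset.image_insert, hlast, himage]

theorem isIncTransversal_image {a : ℕ → α} (hmono : StrictMonoOn a (Set.Icc 1 m))
    (hmem : ∀ i ∈ Set.Icc 1 m, a i ∈ A i) : IsIncTransversal A m ((Finset.Icc 1 m).image a) := by
  induction m with
  | zero => exact .empty
  | succ m ih =>
    have hIcc : Set.Icc 1 m ⊆ Set.Icc 1 (m + 1) := Set.Icc_subset_Icc_right m.le_succ
    have hlast : m + 1 ∈ Set.Icc 1 (m + 1) := Set.right_mem_Icc.2 m.succ_pos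
    rw [← Finset.insert_Icc_right_eq_Icc_add_one m.succ_pos, Finset.image_insert]
    refine (ih (hmono.mono hIcc) fun i hi => hmem i (hIcc hi)).snoc (hmem _ hlast) ?_
    simp only [Finset.forall_mem_image, Finset.mem_Icc]
    exact fun i hi => hmono (hIcc hi) hlast (Nat.lt_succ_of_le hi.2)

/-- Write `B = {b₁ < ⋯ < b_m}`, `C = {c₁ < ⋯ < c_{m+1}}` and `b_{m+1} = v`. Take the largest `i`
such that `i = 1` or `b_{i-1} < c_i`, and put `D = {b₁, …, b_{i-1}, c_i, b_i, …, b_m}`. For `j > i`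
the `j`-th element `b_{j-1}` of `D` lies between `c_j` and `b_j`, hence in `A j` by convexity. -/
theorem IsIncTransversal.exists_superset_lt (hA : ∀ i, (A i).OrdConnected)
    (hB : IsIncTransversal A m B) (hC : IsIncTransversal A (m + 1) C) {v : α}
    (hv : v ∈ A (m + 1)) (hBv : ∀ b ∈ B, b < v) (hCv : ∀ c ∈ C, c < v) :
    ∃ D, IsIncTransversal A (m + 1) D ∧ B ⊆ D ∧ ∀ d ∈ D, d < v := by
  induction hB generalizing C v with
  | empty => exact ⟨C, hC, Finset.empty_subset C, hCv⟩
  | @snoc k B b hB hb hBb ih =>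
    obtain _ | @⟨_, C, c, hC, hc, hCc⟩ := hC
    rw [Finset.forall_mem_insert] at hBv hCv
    rcases le_or_gt c b with hcb | hbc
    · obtain ⟨D, hD, hBD, hDb⟩ := ih hC hb hBb fun x hx => (hCc x hx).trans_le hcb
      have hb' : b ∈ A (k + 1 + 1) := (hA _).out hc hv ⟨hcb, hBv.1.le⟩
      refine ⟨insert b D, hD.snoc hb' hDb, Finset.insert_subset_insert b hBD, ?_⟩
      exact (Finset.forall_mem_insert _ _ _).2 ⟨hBv.1, fun d hd => (hDb d hd).trans hBv.1⟩
    · have hlt : ∀ x ∈ insert b B, x < c :=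
        (Finset.forall_mem_insert _ _ _).2 ⟨hbc, fun x hx => (hBb x hx).trans hbc⟩
      refine ⟨insert c (insert b B), (hB.snoc hb hBb).snoc hc hlt,
        Finset.subset_insert c _, ?_⟩
      simpa only [Finset.forall_mem_insert] using ⟨hCv.1, hBv⟩

/-- The complex `Δ(m, n)` generated by the increasing transversals of `A 1, …, A m` all of whose
elements are less than `n`. -/
def transversalComplexBelow (A : ℕ → Set α) (m : ℕ) (n : α) : Set (Finset α) :=
  { F | ∃ B, IsIncTransversal A m B ∧ (∀ b ∈ B, b < n) ∧ F ⊆ B }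

theorem transversalComplexBelow_zero (n : α) : transversalComplexBelow A 0 n = {∅} := by
  ext F
  constructor
  · rintro ⟨B, hB, -, hFB⟩
    rw [Finset.card_eq_zero.1 hB.card_eq] at hFB
    exact Finset.subset_empty.1 hFB
  · rintro rfl
    exact ⟨∅, .empty, by simp, Finset.Subset.refl ∅⟩

theorem mem_transversalComplexBelow_succ {n : α} {F : Finset α} :
    F ∈ transversalComplexBelow A (m + 1) n ↔
      ∃ x ∈ A (m + 1), x < n ∧ F.erase x ∈ transversalComplexBelow A m x := by
  constructor
  · rintro ⟨C, hC, hCn, hFC⟩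
    obtain _ | @⟨_, B, x, hB, hx, hBx⟩ := hC
    exact ⟨x, hx, hCn x (Finset.mem_insert_self x B), B, hB, hBx, Finset.subset_insert_iff.1 hFC⟩
  · rintro ⟨x, hx, hxn, B, hB, hBx, hFB⟩
    exact ⟨insert x B, hB.snoc hx hBx,
      (Finset.forall_mem_insert _ _ _).2 ⟨hxn, fun b hb => (hBx b hb).trans hxn⟩,
      Finset.subset_insert_iff.2 hFB⟩

theorem transversalComplexBelow_mono : Monotone (transversalComplexBelow A m) :=
  fun _ _ hnn' _ ⟨B, hB, hBn, hFB⟩ => ⟨B, hB, fun b hb => (hBn b hb).trans_le hnn', hFB⟩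

theorem notMem_of_mem_transversalComplexBelow {n : α} {F : Finset α}
    (hF : F ∈ transversalComplexBelow A m n) : n ∉ F :=
  let ⟨_, _, hBn, hFB⟩ := hF
  fun hn => (hBn n (hFB hn)).false

theorem card_le_of_mem_transversalComplexBelow {n : α} {F : Finset α}
    (hF : F ∈ transversalComplexBelow A m n) : F.card ≤ m :=
  let ⟨_, hB, _, hFB⟩ := hF
  hB.card_eq ▸ Finset.card_le_card hFB

theorem transversalComplexBelow_subset_succ (hA : ∀ i, (A i).OrdConnected) {n : α}
    (hn : n ∈ A (m + 1)) (hne : (transversalComplexBelow A (m + 1) n).Nonempty) :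
    transversalComplexBelow A m n ⊆ transversalComplexBelow A (m + 1) n := by
  obtain ⟨-, C, hC, hCn, -⟩ := hne
  rintro F ⟨B, hB, hBn, hFB⟩
  obtain ⟨D, hD, hBD, hDn⟩ := hB.exists_superset_lt hA hC hn hBn hCn
  exact ⟨D, hD, hDn, hFB.trans hBD⟩

end Transversal

section TransversalComplexBelow

variable {A : ℕ → Set ℕ} {m n : ℕ} {F : Finset ℕ}

theorem card_eq_of_isFacet_transversalComplexBelow
    (hF : isFacet (transversalComplexBelow A m n) F) : F.card = m := by
  obtain ⟨⟨B, hB, hBn, hFB⟩, hmax⟩ := hF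
  rw [← hmax B ⟨B, hB, hBn, Finset.Subset.refl B⟩ hFB, hB.card_eq]

theorem transversalComplexBelow_nonempty_of_succ_succ
    (h : (transversalComplexBelow A (m + 1) (n + 1)).Nonempty) :
    (transversalComplexBelow A m n).Nonempty := by
  obtain ⟨F, hF⟩ := h
  obtain ⟨x, -, hxn, hFx⟩ := mem_transversalComplexBelow_succ.1 hF
  exact ⟨_, transversalComplexBelow_mono (Nat.lt_succ_iff.1 hxn) hFx⟩

theorem transversalComplexBelow_succ_of_notMem (hn : n ∉ A (m + 1)) :
    transversalComplexBelow A (m + 1) (n + 1) = transversalComplexBelow A (m + 1) n := by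
  refine Set.Subset.antisymm (fun F hF => ?_) (transversalComplexBelow_mono n.le_succ)
  obtain ⟨x, hx, hxn, hFx⟩ := mem_transversalComplexBelow_succ.1 hF
  have hxn' : x < n := (Nat.lt_succ_iff.1 hxn).lt_of_ne fun h => hn (h ▸ hx)
  exact mem_transversalComplexBelow_succ.2 ⟨x, hx, hxn', hFx⟩

theorem transversalComplexBelow_succ_of_mem (hn : n ∈ A (m + 1)) :
    transversalComplexBelow A (m + 1) (n + 1) =
      transversalComplexBelow A (m + 1) n ∪ coneC n (transversalComplexBelow A m n) := by
  refine Set.Subset.antisymm (fun F hF => ?_)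
    (Set.union_subset (transversalComplexBelow_mono n.le_succ) fun F hF => ?_)
  · obtain ⟨x, hx, hxn, hFx⟩ := mem_transversalComplexBelow_succ.1 hF
    rcases (Nat.lt_succ_iff.1 hxn).eq_or_lt with rfl | hxn'
    · exact Or.inr hFx
    · exact Or.inl (mem_transversalComplexBelow_succ.2 ⟨x, hx, hxn', hFx⟩)
  · exact mem_transversalComplexBelow_succ.2 ⟨n, hn, n.lt_succ_self, hF⟩

theorem vertexDecomposable_transversalComplexBelow (hA : ∀ i, (A i).OrdConnected)
    (hne : (transversalComplexBelow A m n).Nonempty) :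
    VertexDecomposable (transversalComplexBelow A m n) := by
  induction n generalizing m with
  | zero =>
    obtain ⟨F, B, hB, hB0, -⟩ := hne
    obtain rfl : B = ∅ := Finset.eq_empty_of_forall_notMem fun b hb => (hB0 b hb).not_ge b.zero_le
    obtain rfl : 0 = m := hB.card_eq
    rw [transversalComplexBelow_zero]
    exact .empty
  | succ n ih =>
    cases m with
    | zero =>
      rw [transversalComplexBelow_zero]
      exact .empty
    | succ m =>
      by_cases hn : n ∈ A (m + 1)
      · have hlink : VertexDecomposable (transversalComplexBelow A m n) :=
          ih (transversalComplexBelow_nonempty_of_succ_succ hne)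
        rw [transversalComplexBelow_succ_of_mem hn]
        rcases (transversalComplexBelow A (m + 1) n).eq_empty_or_nonempty with hempty | hne'
        · rw [hempty, Set.empty_union]
          exact vertexDecomposable_coneC hlink fun F => notMem_of_mem_transversalComplexBelow
        · refine vertexDecomposable_union_coneC (ih hne') hlink
            (fun F => notMem_of_mem_transversalComplexBelow)
            (transversalComplexBelow_subset_succ hA hn hne') fun G hG hGlink => ?_
          have hcard : G.card = m + 1 := card_eq_of_isFacet_transversalComplexBelow hG
          have hcard_le : G.card ≤ m := card_le_of_mem_transversalComplexBelow hGlink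
          omega
      · rw [transversalComplexBelow_succ_of_notMem hn] at hne ⊢
        exact ih hne

end TransversalComplexBelow

section YoungComplex

variable {r : ℕ} {lam : ℕ → ℕ}

theorem ordConnected_inColumn_one (hlam : AntitoneOn lam (Set.Icc 1 r)) (i : ℕ) :
    {a | inColumn 1 r lam i a}.OrdConnected := by
  refine ⟨?_⟩
  rintro _ ⟨j, hj, hjr, hij, rfl⟩ _ ⟨j', hj', hjr', -, rfl⟩ a ⟨hja, haj'⟩
  refine ⟨r + i - a, by omega, by omega, ?_, by omega⟩
  exact hij.trans (hlam ⟨by omega, by omega⟩ ⟨hj, hjr⟩ (by omega))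

theorem inColumn.lt {t i a : ℕ} (h : inColumn t r lam i a) : a < r * t + i + 1 := by
  obtain ⟨j, -, -, -, rfl⟩ := h
  have : (r - j) * t ≤ r * t := Nat.mul_le_mul_right t (r.sub_le j)
  omega

theorem youngComplex_eq_transversalComplexBelow (t r : ℕ) (lam : ℕ → ℕ) :
    youngComplex t r lam =
      transversalComplexBelow (fun i => {a | inColumn t r lam i a}) (lam 1)
        (r * t + lam 1 + 1) := by
  ext F
  constructor
  · rintro ⟨a, hlt, hcol, hF⟩
    refine ⟨_, isIncTransversal_image (strictMonoOn_of_lt_add_one Set.ordConnected_Icc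
      fun i _ hi hi' => hlt i hi.1 hi'.2) (fun i hi => hcol i hi.1 hi.2), ?_, hF⟩
    simp only [Finset.forall_mem_image, Finset.mem_Icc]
    intro i hi
    have := (hcol i hi.1 hi.2).lt
    omega
  · rintro ⟨B, hB, -, hF⟩
    obtain ⟨a, hmono, hmem, rfl⟩ := hB.exists_strictMonoOn
    exact ⟨a, fun i hi hi' => hmono ⟨hi, hi'.le⟩ ⟨hi.trans i.le_succ, hi'⟩ i.lt_succ_self,
      fun i hi hi' => hmem i ⟨hi, hi'⟩, hF⟩

theorem empty_mem_youngComplex (t : ℕ) (hr : 1 ≤ r) : ∅ ∈ youngComplex t r lam :=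
  ⟨fun i => (r - 1) * t + i, fun _ _ _ => Nat.lt_succ_self _,
    fun _ _ hi => ⟨1, le_rfl, hr, hi, rfl⟩, Finset.empty_subset _⟩

end YoungComplex

/-- For every partition `λ`, the `1`-Young complex `Δ_1^λ` is vertex-decomposable. -/
theorem youngComplex_one_vertexDecomposable (r : ℕ) (lam : ℕ → ℕ) (hr : 1 ≤ r)
    (hlam : isPartition r lam) :
    VertexDecomposable (youngComplex 1 r lam) := by
  have hanti : AntitoneOn lam (Set.Icc 1 r) := fun j hj j' hj' hjj' =>
    hlam.2 j j' hj.1 hjj' hj'.2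
  have hne : (youngComplex 1 r lam).Nonempty := ⟨∅, empty_mem_youngComplex 1 hr⟩
  rw [youngComplex_eq_transversalComplexBelow] at hne ⊢
  exact vertexDecomposable_transversalComplexBelow (ordConnected_inColumn_one hanti) hne
end

section
/- Let t ≥ 2 be an integer and λ = (λ_1 ≥ λ_2 ≥ ⋯ ≥ λ_r ≥ 1) a partition. Then the t-Young complex Δ_t^λ is vertex-decomposable if and only if either r = 1, or r ≥ 2 and λ_2 ≤ t. -/
/-!
Links of faces of a vertex-decomposable complex are vertex-decomposable, and a vertex-decomposable
complex without isolated vertices is connected. If `λ_2 > t`, remove the columns `2, …, t + 1` from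
the first row of the diagram. A facet through the resulting face `F` takes the entry
`(r - 1)t + 1` either in row `1`, hence in column `1`, and then all its other elements are larger;
or in a lower row, hence in a column beyond `t`, and then it has so few larger elements that they
all lie in `F`. So no facet of the link of `F` mixes vertices below and above `(r - 1)t + 1`;
both kinds occur, and the facets of the link have `t ≥ 2` elements, so the link is disconnected
without isolated vertices.

If all rows but the first have length at most `t`, the entries of the diagram are distinct, and a
facet is a choice of one cell per column, in weakly decreasing rows. More generally, let column `i`
range over the rows between `l i` and `u i`, with `l` and `u` weakly decreasing. In the first column
with `l i < u i`, the cell in row `l i` is a shedding vertex, as moving it to row `u i` preserves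
monotonicity. Deleting it raises `l i` by one; its link deletes column `i` and caps the later
columns at `l i`. Both are complexes of the same kind on fewer cells.
-/

section VertexDecomposability

variable {Δ : Set (Finset ℕ)} {F G : Finset ℕ} {v w x y : ℕ}

lemma isLowerSet_delC (hΔ : IsLowerSet Δ) (v : ℕ) : IsLowerSet (delC Δ v) :=
  fun _ _ hFG hG => ⟨hΔ hFG hG.1, fun hv => hG.2 (hFG hv)⟩

lemma isLowerSet_linkC (hΔ : IsLowerSet Δ) (v : ℕ) : IsLowerSet (linkC Δ v) :=
  fun _ _ hFG hG => ⟨hΔ hFG hG.1, fun hv => hG.2.1 (hFG hv),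
    hΔ (Finset.insert_subset_insert v hFG) hG.2.2⟩

lemma linkC_comm (Δ : Set (Finset ℕ)) (v w : ℕ) :
    linkC (linkC Δ v) w = linkC (linkC Δ w) v := by
  ext G
  simp only [linkC, Set.mem_ofPred_eq, Finset.mem_insert, Finset.insert_comm v w, eq_comm (a := v)]
  tauto

lemma delC_linkC (hvw : v ≠ w) : delC (linkC Δ w) v = linkC (delC Δ v) w := by
  ext G
  simp only [linkC, delC, Set.mem_ofPred_eq, Finset.mem_insert]
  tauto

lemma isFacet_linkC_iff (hΔ : IsLowerSet Δ) :
    isFacet (linkC Δ w) G ↔ w ∉ G ∧ isFacet Δ (insert w G) := by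
  constructor
  · rintro ⟨⟨-, hwG, hins⟩, hmax⟩
    refine ⟨hwG, hins, fun H hH hGH => ?_⟩
    obtain ⟨hwH, hGH⟩ := Finset.insert_subset_iff.1 hGH
    have herase : H.erase w = G :=
      hmax _ ⟨hΔ (Finset.erase_subset w H) hH, Finset.notMem_erase w H,
        by rwa [Finset.insert_erase hwH]⟩ (Finset.subset_erase.2 ⟨hGH, hwG⟩)
    rw [← herase, Finset.insert_erase hwH]
  · rintro ⟨hwG, hins, hmax⟩
    refine ⟨⟨hΔ (Finset.subset_insert w G) hins, hwG, hins⟩, fun H hH hGH => ?_⟩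
    rw [← Finset.erase_insert hH.2.1, hmax _ hH.2.2 (Finset.insert_subset_insert w hGH),
      Finset.erase_insert hwG]

theorem VertexDecomposable.linkC_of_mem (h : VertexDecomposable Δ) (hΔ : IsLowerSet Δ)
    (hw : {w} ∈ Δ) : VertexDecomposable (linkC Δ w) := by
  induction h with
  | empty => simp at hw
  | simplex S =>
    convert VertexDecomposable.simplex (S.erase w) using 1
    ext G
    have hwS : w ∈ S := Finset.singleton_subset_iff.1 hw
    simp only [linkC, Set.mem_ofPred_eq, Finset.insert_subset_iff, Finset.subset_erase]
    tauto
  | shed Δ v hv hshed hlink _ ihlink ihdel =>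
    obtain rfl | hvw := eq_or_ne v w
    · exact hlink
    have hwdel : {w} ∈ delC Δ v := ⟨hw, by simpa using hvw⟩
    have hdel_link : VertexDecomposable (delC (linkC Δ w) v) := by
      rw [delC_linkC hvw]
      exact ihdel (isLowerSet_delC hΔ v) hwdel
    by_cases hedge : {w, v} ∈ Δ
    · refine .shed _ v ⟨hv, by simpa using hvw.symm, hedge⟩ (fun G hG => ?_) ?_ hdel_link
      · rw [delC_linkC hvw, isFacet_linkC_iff (isLowerSet_delC hΔ v)] at hG
        exact (isFacet_linkC_iff hΔ).2 ⟨hG.1, hshed _ hG.2⟩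
      · rw [linkC_comm Δ w v]
        exact ihlink (isLowerSet_linkC hΔ v)
          ⟨hw, by simpa using hvw, by rwa [Finset.pair_comm]⟩
    · convert hdel_link using 1
      refine Set.Subset.antisymm (fun G hG => ⟨hG, fun hvG => hedge ?_⟩) fun G hG => hG.1
      exact hΔ (Finset.insert_subset_insert w (Finset.singleton_subset_iff.2 hvG)) hG.2.2

theorem VertexDecomposable.reflTransGen_edge (h : VertexDecomposable Δ) (hΔ : IsLowerSet Δ)
    (hisolated : ∀ z, ¬ isFacet Δ {z}) (hx : {x} ∈ Δ) (hy : {y} ∈ Δ) :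
    Relation.ReflTransGen (fun a b => {a, b} ∈ Δ) x y := by
  induction h generalizing x y with
  | empty => simp at hx
  | simplex S => exact .single (Finset.insert_subset (Finset.singleton_subset_iff.1 hx) hy)
  | shed Δ v hv hshed _ _ _ ihdel =>
    have hconn_del {x y : ℕ} (hx : {x} ∈ Δ) (hy : {y} ∈ Δ) (hxv : x ≠ v) (hyv : y ≠ v) :
        Relation.ReflTransGen (fun a b => {a, b} ∈ Δ) x y :=
      .mono (fun _ _ hab => hab.1) _ _ <| ihdel (isLowerSet_delC hΔ v)
        (fun z hz => hisolated z (hshed _ hz)) ⟨hx, by simpa using hxv.symm⟩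
        ⟨hy, by simpa using hyv.symm⟩
    obtain ⟨z, hzv, hedge⟩ : ∃ z ≠ v, {z, v} ∈ Δ := by
      by_contra! hno
      refine hisolated v ⟨hv, fun H hH hvH => hvH.antisymm' fun z hz => ?_⟩
      by_contra hzv
      exact hno z (by simpa using hzv) (hΔ (Finset.insert_subset hz hvH) hH)
    have hz : {z} ∈ Δ := hΔ (by simp) hedge
    by_cases hxv : x = v <;> by_cases hyv : y = v
    · rw [hxv, hyv]
    · exact .head (by rwa [hxv, Finset.pair_comm]) (hconn_del hz hy hzv hyv)
    · exact .tail (hconn_del hx hz hxv hzv) (by rwa [hyv])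
    · exact hconn_del hx hy hxv hyv

/-- The link of a face `F` of `Δ`, generalizing `linkC` to faces of arbitrary size. -/
def faceLink (Δ : Set (Finset ℕ)) (F : Finset ℕ) : Set (Finset ℕ) :=
  {G | Disjoint F G ∧ F ∪ G ∈ Δ}

lemma isLowerSet_faceLink (hΔ : IsLowerSet Δ) (F : Finset ℕ) : IsLowerSet (faceLink Δ F) :=
  fun _ _ hHG hG => ⟨hG.1.mono_right hHG, hΔ (Finset.union_subset_union_right hHG) hG.2⟩

lemma faceLink_insert (hΔ : IsLowerSet Δ) (hv : v ∉ F) :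
    faceLink Δ (insert v F) = linkC (faceLink Δ F) v := by
  ext G
  have hunion : insert v F ∪ G = F ∪ insert v G := by
    rw [Finset.insert_union, Finset.union_insert]
  simp only [faceLink, linkC, Set.mem_ofPred_eq, Finset.disjoint_insert_left,
    Finset.disjoint_insert_right, hunion]
  have hmem := hΔ (Finset.union_subset_union_right (s := F) (Finset.subset_insert v G))
  tauto

theorem VertexDecomposable.faceLink_of_mem (h : VertexDecomposable Δ) (hΔ : IsLowerSet Δ)
    (hF : F ∈ Δ) : VertexDecomposable (faceLink Δ F) := by
  induction F using Finset.induction_on with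
  | empty => simpa [faceLink] using h
  | insert v F hv ih =>
    rw [faceLink_insert hΔ hv]
    refine (ih (hΔ (Finset.subset_insert v F) hF)).linkC_of_mem (isLowerSet_faceLink hΔ F) ?_
    exact ⟨by simpa using hv, by rwa [Finset.union_comm, ← Finset.insert_eq]⟩

end VertexDecomposability

section GeneratedComplex

variable {𝓕 : Set (Finset ℕ)} {d v : ℕ} {F G : Finset ℕ}

lemma card_of_isFacet_faceLink_lowerClosure (h𝓕 : 𝓕.Sized d)
    (hG : isFacet (faceLink (lowerClosure 𝓕) F) G) : G.card = d - F.card := by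
  obtain ⟨⟨hdisj, X, hX, hFGX⟩, hmax⟩ := hG
  have hFX : F ⊆ X := Finset.union_subset_left hFGX
  have hXF : X \ F = G := hmax _
    ⟨Finset.disjoint_sdiff, X, hX, (Finset.union_sdiff_of_subset hFX).le⟩
    (Finset.subset_sdiff.2 ⟨Finset.union_subset_right hFGX, hdisj.symm⟩)
  rw [← hXF, Finset.card_sdiff_of_subset hFX, h𝓕 hX]

theorem not_vertexDecomposable_lowerClosure_of_separated (h𝓕 : 𝓕.Sized d) (A : Set ℕ)
    (hcard : F.card + 2 ≤ d)
    (hsep : ∀ X ∈ 𝓕, F ⊆ X → (∀ x ∈ X \ F, x ∈ A) ∨ (∀ x ∈ X \ F, x ∉ A))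
    (hin : ∃ X ∈ 𝓕, F ⊆ X ∧ ∃ x ∈ X \ F, x ∈ A)
    (hout : ∃ X ∈ 𝓕, F ⊆ X ∧ ∃ x ∈ X \ F, x ∉ A) :
    ¬ VertexDecomposable (lowerClosure 𝓕 : Set (Finset ℕ)) := by
  intro hvd
  obtain ⟨X, hX, hFX, x, hxX, hxA⟩ := hin
  obtain ⟨Y, hY, hFY, y, hyY, hyA⟩ := hout
  have hlower := (lowerClosure 𝓕).lower
  have hvertex {Z : Finset ℕ} (hZ : Z ∈ 𝓕) (hFZ : F ⊆ Z) {z : ℕ} (hz : z ∈ Z \ F) :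
      {z} ∈ faceLink (lowerClosure 𝓕) F := by
    rw [Finset.mem_sdiff] at hz
    exact ⟨Finset.disjoint_singleton_right.2 hz.2, Z, hZ,
      Finset.union_subset hFZ (Finset.singleton_subset_iff.2 hz.1)⟩
  have hpath : Relation.ReflTransGen (fun a b => {a, b} ∈ faceLink (lowerClosure 𝓕) F) x y := by
    have hisolated (z : ℕ) : ¬ isFacet (faceLink (lowerClosure 𝓕) F) {z} := fun hz => by
      have := card_of_isFacet_faceLink_lowerClosure h𝓕 hz
      rw [Finset.card_singleton] at this
      omega
    exact (hvd.faceLink_of_mem hlower ⟨X, hX, hFX⟩).reflTransGen_edge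
      (isLowerSet_faceLink hlower F) hisolated (hvertex hX hFX hxX) (hvertex hY hFY hyY)
  suffices y ∈ A from hyA this
  clear hyA hyY
  induction hpath with
  | refl => exact hxA
  | @tail a b _ hab ha =>
    obtain ⟨hdisj, Z, hZ, hFZ⟩ := hab
    have hsub : {a, b} ⊆ Z \ F :=
      Finset.subset_sdiff.2 ⟨Finset.union_subset_right hFZ, hdisj.symm⟩
    rcases hsep Z hZ (Finset.union_subset_left hFZ) with hZA | hZA
    · exact hZA b (hsub (by simp))
    · exact absurd ha (hZA a (hsub (by simp)))

lemma delC_lowerClosure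
    (hexch : ∀ X ∈ 𝓕, v ∈ X → ∃ Y ∈ 𝓕, v ∉ Y ∧ X.erase v ⊆ Y) :
    delC (lowerClosure 𝓕) v = lowerClosure {X ∈ 𝓕 | v ∉ X} := by
  ext G
  constructor
  · rintro ⟨⟨X, hX, hGX⟩, hvG⟩
    by_cases hvX : v ∈ X
    · obtain ⟨Y, hY, hvY, hXY⟩ := hexch X hX hvX
      exact ⟨Y, ⟨hY, hvY⟩, (Finset.subset_erase.2 ⟨hGX, hvG⟩).trans hXY⟩
    · exact ⟨X, ⟨hX, hvX⟩, hGX⟩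
  · rintro ⟨X, ⟨hX, hvX⟩, hGX⟩
    exact ⟨⟨X, hX, hGX⟩, fun hvG => hvX (hGX hvG)⟩

lemma linkC_lowerClosure (𝓕 : Set (Finset ℕ)) (v : ℕ) :
    linkC (lowerClosure 𝓕) v = lowerClosure ((·.erase v) '' {X ∈ 𝓕 | v ∈ X}) := by
  ext G
  constructor
  · rintro ⟨-, hvG, X, hX, hGX⟩
    obtain ⟨hvX, hGX⟩ := Finset.insert_subset_iff.1 hGX
    exact ⟨_, ⟨X, ⟨hX, hvX⟩, rfl⟩, Finset.subset_erase.2 ⟨hGX, hvG⟩⟩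
  · rintro ⟨_, ⟨X, ⟨hX, hvX⟩, rfl⟩, hGX⟩
    obtain ⟨hGX, hvG⟩ := Finset.subset_erase.1 hGX
    exact ⟨⟨X, hX, hGX⟩, hvG, X, hX, Finset.insert_subset hvX hGX⟩

lemma isFacet_lowerClosure (h𝓕 : 𝓕.Sized d) (hG : G ∈ 𝓕) : isFacet (lowerClosure 𝓕) G := by
  refine ⟨subset_lowerClosure hG, fun H ⟨X, hX, hHX⟩ hGH => ?_⟩
  refine (Finset.eq_of_subset_of_card_le hGH ?_).symm
  rw [h𝓕 hG, ← h𝓕 hX]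
  exact Finset.card_le_card hHX

lemma mem_of_isFacet_lowerClosure (hG : isFacet (lowerClosure 𝓕) G) : G ∈ 𝓕 := by
  obtain ⟨⟨X, hX, hGX⟩, hmax⟩ := hG
  rwa [← hmax X (subset_lowerClosure hX) hGX]

theorem vertexDecomposable_lowerClosure_of_exchange (h𝓕 : 𝓕.Sized d)
    (hv : ∃ X ∈ 𝓕, v ∈ X)
    (hexch : ∀ X ∈ 𝓕, v ∈ X → ∃ Y ∈ 𝓕, v ∉ Y ∧ X.erase v ⊆ Y)
    (hlink : VertexDecomposable
      (lowerClosure ((·.erase v) '' {X ∈ 𝓕 | v ∈ X}) : Set (Finset ℕ)))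
    (hdel : VertexDecomposable (lowerClosure {X ∈ 𝓕 | v ∉ X} : Set (Finset ℕ))) :
    VertexDecomposable (lowerClosure 𝓕 : Set (Finset ℕ)) := by
  rw [← linkC_lowerClosure] at hlink
  rw [← delC_lowerClosure hexch] at hdel
  obtain ⟨X, hX, hvX⟩ := hv
  refine .shed _ v ⟨X, hX, Finset.singleton_subset_iff.2 hvX⟩ (fun G hG => ?_) hlink hdel
  rw [delC_lowerClosure hexch] at hG
  exact isFacet_lowerClosure h𝓕 (mem_of_isFacet_lowerClosure hG).1

end GeneratedComplex

section AntitoneSections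

variable {ι : Type*} {I : Finset ι} {e : ι → ℕ → ℕ} {l u c : ι → ℕ} {i : ι} {k : ℕ}

/-- The cells `(i, k)` with column `i ∈ I` and row `l i ≤ k ≤ u i`. -/
def cells (I : Finset ι) (l u : ι → ℕ) : Finset (Σ _ : ι, ℕ) :=
  I.sigma fun i => Finset.Icc (l i) (u i)

lemma mem_cells : ⟨i, k⟩ ∈ cells I l u ↔ i ∈ I ∧ k ∈ Set.Icc (l i) (u i) := by
  simp [cells]

lemma cells_subset_cells {J : Finset ι} {l' u' : ι → ℕ} (hJI : J ⊆ I)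
    (hl : ∀ j ∈ J, l j ≤ l' j) (hu : ∀ j ∈ J, u' j ≤ u j) : cells J l' u' ⊆ cells I l u := by
  rintro ⟨j, k⟩ hjk
  rw [mem_cells] at hjk ⊢
  exact ⟨hJI hjk.1, (hl j hjk.1).trans hjk.2.1, hjk.2.2.trans (hu j hjk.1)⟩

lemma image_update [DecidableEq ι] (e : ι → ℕ → ℕ) (c : ι → ℕ) (hi : i ∈ I) (k : ℕ) :
    (I.image fun j => e j (Function.update c i k j)) =
      insert (e i k) ((I.erase i).image fun j => e j (c j)) := by
  conv_lhs => rw [← Finset.insert_erase hi, Finset.image_insert, Function.update_self]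
  congr 1
  refine Finset.image_congr fun j hj => ?_
  simp [Finset.ne_of_mem_erase hj]

section Injective

variable (he : Set.InjOn (fun p => e p.1 p.2) (cells I l u : Set (Σ _ : ι, ℕ)))
include he

lemma label_mem_image_iff (hc : ∀ j ∈ I, c j ∈ Set.Icc (l j) (u j)) (hi : i ∈ I)
    (hk : k ∈ Set.Icc (l i) (u i)) : e i k ∈ I.image (fun j => e j (c j)) ↔ c i = k := by
  constructor
  · intro hmem
    obtain ⟨j, hj, hjk⟩ := Finset.mem_image.1 hmem
    have hcell := he (mem_cells.2 ⟨hj, hc j hj⟩) (mem_cells.2 ⟨hi, hk⟩) hjk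
    cases hcell
    rfl
  · rintro rfl
    exact Finset.mem_image_of_mem _ hi

lemma injOn_label (hc : ∀ j ∈ I, c j ∈ Set.Icc (l j) (u j)) :
    Set.InjOn (fun j => e j (c j)) I := fun i hi j hj hij =>
  congrArg Sigma.fst (he (mem_cells.2 ⟨hi, hc i hi⟩) (mem_cells.2 ⟨hj, hc j hj⟩) hij)

lemma erase_image_label [DecidableEq ι] (hc : ∀ j ∈ I, c j ∈ Set.Icc (l j) (u j))
    (hi : i ∈ I) :
    (I.image fun j => e j (c j)).erase (e i (c i)) = (I.erase i).image fun j => e j (c j) := by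
  have := Finset.image_sdiff_of_injOn (injOn_label he hc) (Finset.singleton_subset_iff.2 hi)
  simpa [Finset.sdiff_singleton_eq_erase] using this.symm

end Injective

section Preorder

variable [Preorder ι]

/-- The label sets of the transversals of `cells I l u` that pick one cell `(i, c i)` in each
column, in weakly decreasing rows; the cell `(i, k)` carries the label `e i k`. -/
def antitoneSections (I : Finset ι) (e : ι → ℕ → ℕ) (l u : ι → ℕ) : Set (Finset ℕ) :=
  {X | ∃ c : ι → ℕ, AntitoneOn c I ∧ (∀ i ∈ I, c i ∈ Set.Icc (l i) (u i)) ∧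
    X = I.image fun i => e i (c i)}

lemma sized_antitoneSections
    (he : Set.InjOn (fun p => e p.1 p.2) (cells I l u : Set (Σ _ : ι, ℕ))) :
    (antitoneSections I e l u).Sized I.card := by
  rintro _ ⟨c, -, hc, rfl⟩
  exact Finset.card_image_of_injOn (injOn_label he hc)

lemma antitoneSections_self (hl : AntitoneOn l I) (h : ∀ i ∈ I, l i = u i) :
    antitoneSections I e l u = {I.image fun i => e i (l i)} := by
  refine Set.Subset.antisymm ?_ (Set.singleton_subset_iff.2
    ⟨l, hl, fun i hi => ⟨le_rfl, (h i hi).le⟩, rfl⟩)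
  rintro _ ⟨c, -, hc, rfl⟩
  refine Finset.image_congr fun i hi => ?_
  have : c i = l i := le_antisymm ((hc i hi).2.trans (h i hi).ge) (hc i hi).1
  simp only [this]

end Preorder

variable [LinearOrder ι]

/-- The upper bound `u` lowered to `k` in the columns after `i`: the room left by a weakly
decreasing choice of rows that takes row `k` in column `i`. -/
def capAfter (i : ι) (k : ℕ) (u : ι → ℕ) (j : ι) : ℕ := if i < j then min (u j) k else u j

lemma capAfter_le (i : ι) (k : ℕ) (u : ι → ℕ) (j : ι) : capAfter i k u j ≤ u j := by
  grind [capAfter]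

lemma capAfter_le_of_lt {j : ι} (hij : i < j) : capAfter i k u j ≤ k := by
  grind [capAfter]

lemma le_capAfter {m : ℕ} {j : ι} (hu : m ≤ u j) (hk : i < j → m ≤ k) : m ≤ capAfter i k u j := by
  grind [capAfter]

lemma antitoneOn_capAfter {s : Set ι} (i : ι) (k : ℕ) (hu : AntitoneOn u s) :
    AntitoneOn (capAfter i k u) s := fun _ ha b hb hab =>
  le_capAfter ((capAfter_le i k u b).trans (hu ha hb hab)) fun hia =>
    capAfter_le_of_lt (hia.trans_le hab)

lemma antitoneOn_update (hc : AntitoneOn c (I.erase i))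
    (hbefore : ∀ j ∈ I, j < i → k ≤ c j) (hafter : ∀ j ∈ I, i < j → c j ≤ k) :
    AntitoneOn (Function.update c i k) I := by
  intro a ha b hb hab
  by_cases hai : a = i <;> by_cases hbi : b = i
  · rw [hai, hbi]
  · simpa [hai, hbi] using hafter b hb ((hai ▸ hab).lt_of_ne' hbi)
  · simpa [hai, hbi] using hbefore a ha ((hbi ▸ hab).lt_of_ne hai)
  · simpa [hai, hbi] using
      hc (Finset.mem_erase.2 ⟨hai, ha⟩) (Finset.mem_erase.2 ⟨hbi, hb⟩) hab

section Injective

variable (he : Set.InjOn (fun p => e p.1 p.2) (cells I l u : Set (Σ _ : ι, ℕ)))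
include he

lemma antitoneSections_notMem (hi : i ∈ I) (hlu : l i ≤ u i) :
    {X ∈ antitoneSections I e l u | e i (l i) ∉ X} =
      antitoneSections I e (Function.update l i (l i + 1)) u := by
  ext X
  constructor
  · rintro ⟨⟨c, hanti, hc, rfl⟩, hX⟩
    rw [label_mem_image_iff he hc hi ⟨le_rfl, hlu⟩] at hX
    refine ⟨c, hanti, fun j hj => ⟨?_, (hc j hj).2⟩, rfl⟩
    obtain rfl | hji := eq_or_ne j i
    · simpa using (hc j hj).1.lt_of_ne' hX
    · simpa [hji] using (hc j hj).1
  · rintro ⟨c, hanti, hc, rfl⟩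
    have hci : l i + 1 ≤ c i := by simpa using (hc i hi).1
    have hc' : ∀ j ∈ I, c j ∈ Set.Icc (l j) (u j) := by
      refine fun j hj => ⟨?_, (hc j hj).2⟩
      obtain rfl | hji := eq_or_ne j i
      · omega
      · simpa [hji] using (hc j hj).1
    refine ⟨⟨c, hanti, hc', rfl⟩, ?_⟩
    rw [label_mem_image_iff he hc' hi ⟨le_rfl, hlu⟩]
    omega

lemma erase_image_antitoneSections_mem (hi : i ∈ I) (hlu : l i ≤ u i)
    (hbefore : ∀ j ∈ I, j < i → u i ≤ l j) :
    (·.erase (e i (l i))) '' {X ∈ antitoneSections I e l u | e i (l i) ∈ X} =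
      antitoneSections (I.erase i) e l (capAfter i (l i) u) := by
  ext X
  constructor
  · rintro ⟨_, ⟨⟨c, hanti, hc, rfl⟩, hX⟩, rfl⟩
    rw [label_mem_image_iff he hc hi ⟨le_rfl, hlu⟩] at hX
    refine ⟨c, hanti.mono (by simp), fun j hj => ?_, ?_⟩
    · have hjI := Finset.mem_of_mem_erase hj
      exact ⟨(hc j hjI).1, le_capAfter (hc j hjI).2 fun hij => hX ▸ hanti hi hjI hij.le⟩
    · simp only [← hX]
      exact erase_image_label he hc hi
  · rintro ⟨c, hanti, hc, rfl⟩
    have hcap {j : ι} (hj : j ∈ I) (hji : j ≠ i) := hc j (Finset.mem_erase.2 ⟨hji, hj⟩)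
    have hc' : ∀ j ∈ I, Function.update c i (l i) j ∈ Set.Icc (l j) (u j) := by
      intro j hj
      obtain rfl | hji := eq_or_ne j i
      · simpa using hlu
      · simpa [hji] using ⟨(hcap hj hji).1, (hcap hj hji).2.trans (capAfter_le i _ u j)⟩
    have hanti' : AntitoneOn (Function.update c i (l i)) I :=
      antitoneOn_update hanti
        (fun j hj hji => hlu.trans ((hbefore j hj hji).trans (hcap hj hji.ne).1))
        (fun j hj hij => (hcap hj hij.ne').2.trans (capAfter_le_of_lt hij))
    refine ⟨_, ⟨⟨_, hanti', hc', rfl⟩, ?_⟩, ?_⟩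
    · rw [label_mem_image_iff he hc' hi ⟨le_rfl, hlu⟩, Function.update_self]
    · have := erase_image_label he hc' hi
      rw [Function.update_self] at this
      refine this.trans (Finset.image_congr fun j hj => ?_)
      simp [Finset.ne_of_mem_erase hj]

lemma exists_antitoneSections_exchange (hi : i ∈ I) (hlu : l i < u i)
    (hbefore : ∀ j ∈ I, j < i → u i ≤ l j) {X : Finset ℕ}
    (hX : X ∈ antitoneSections I e l u) (hmem : e i (l i) ∈ X) :
    ∃ Y ∈ antitoneSections I e l u, e i (l i) ∉ Y ∧ X.erase (e i (l i)) ⊆ Y := by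
  obtain ⟨c, hanti, hc, rfl⟩ := hX
  rw [label_mem_image_iff he hc hi ⟨le_rfl, hlu.le⟩] at hmem
  have hanti' : AntitoneOn (Function.update c i (u i)) I :=
    antitoneOn_update (hanti.mono (by simp))
      (fun j hj hji => (hbefore j hj hji).trans (hc j hj).1)
      (fun j hj hij => (hanti hi hj hij.le).trans (hc i hi).2)
  have hc' : ∀ j ∈ I, Function.update c i (u i) j ∈ Set.Icc (l j) (u j) := by
    intro j hj
    obtain rfl | hji := eq_or_ne j i
    · simpa using hlu.le
    · simpa [hji] using hc j hj
  refine ⟨_, ⟨_, hanti', hc', rfl⟩, ?_, ?_⟩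
  · rw [label_mem_image_iff he hc' hi ⟨le_rfl, hlu.le⟩, Function.update_self]
    exact hlu.ne'
  · rw [image_update e c hi, ← hmem, erase_image_label he hc hi]
    exact Finset.subset_insert _ _

end Injective

lemma exists_free_column (hu : AntitoneOn u I) (hfree : ∃ i ∈ I, l i < u i) :
    ∃ i ∈ I, l i < u i ∧ ∀ j ∈ I, j < i → u i ≤ l j := by
  obtain ⟨i, hmin⟩ := Finset.exists_minimal (Finset.filter_nonempty_iff.2 hfree)
  obtain ⟨hi, hlui⟩ := Finset.mem_filter.1 hmin.prop
  refine ⟨i, hi, hlui, fun j hj hji => (hu hj hi hji.le).trans (not_lt.1 fun hlt => ?_)⟩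
  exact hji.not_ge (hmin.le_of_le (Finset.mem_filter.2 ⟨hj, hlt⟩) hji.le)

theorem vertexDecomposable_antitoneSections (hl : AntitoneOn l I) (hu : AntitoneOn u I)
    (hlu : ∀ i ∈ I, l i ≤ u i)
    (he : Set.InjOn (fun p => e p.1 p.2) (cells I l u : Set (Σ _ : ι, ℕ))) :
    VertexDecomposable (lowerClosure (antitoneSections I e l u) : Set (Finset ℕ)) := by
  induction hC : cells I l u using Finset.strongInduction generalizing I l u with
  | H C ih
  subst hC
  by_cases! hfree : ∀ i ∈ I, u i ≤ l i
  · rw [antitoneSections_self hl fun i hi => (hlu i hi).antisymm (hfree i hi),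
      lowerClosure_singleton]
    exact .simplex _
  obtain ⟨i, hi, hlui, hbefore⟩ := exists_free_column hu hfree
  have hcell : ⟨i, l i⟩ ∈ cells I l u := mem_cells.2 ⟨hi, le_rfl, hlui.le⟩
  refine vertexDecomposable_lowerClosure_of_exchange (v := e i (l i))
    (sized_antitoneSections he)
    ⟨_, ⟨l, hl, fun j hj => ⟨le_rfl, hlu j hj⟩, rfl⟩, Finset.mem_image_of_mem _ hi⟩
    (fun X hX hmem => exists_antitoneSections_exchange he hi hlui hbefore hX hmem) ?_ ?_
  · rw [erase_image_antitoneSections_mem he hi hlui.le hbefore]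
    have hsub : cells (I.erase i) l (capAfter i (l i) u) ⊆ cells I l u :=
      cells_subset_cells (Finset.erase_subset i I) (fun _ _ => le_rfl)
        fun j _ => capAfter_le i _ u j
    refine ih _ ⟨hsub, fun h => by simpa [mem_cells] using h hcell⟩ (hl.mono (by simp))
      (antitoneOn_capAfter i _ (hu.mono (by simp))) (fun j hj => ?_) (he.mono hsub) rfl
    have hjI := Finset.mem_of_mem_erase hj
    exact le_capAfter (hlu j hjI) fun hij => hl hi hjI hij.le
  · rw [antitoneSections_notMem he hi hlui.le]
    have hsub : cells I (Function.update l i (l i + 1)) u ⊆ cells I l u :=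
      cells_subset_cells subset_rfl (by grind) (fun _ _ => le_rfl)
    refine ih _ ⟨hsub, fun h => by simpa [mem_cells] using h hcell⟩
      (antitoneOn_update (hl.mono (by simp)) ?_ ?_) hu ?_ (he.mono hsub) rfl
    · exact fun j hj hji => (Nat.succ_le_of_lt hlui).trans (hbefore j hj hji)
    · exact fun j hj hij => (hl hi hj hij.le).trans (Nat.le_succ _)
    · grind

end AntitoneSections

section YoungComplex

variable {t r i j j' : ℕ} {lam c : ℕ → ℕ} {X : Finset ℕ}

lemma isPartition.antitoneOn (h : isPartition r lam) : AntitoneOn lam (Set.Icc 1 r) :=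
  fun j hj j' hj' hjj' => h.2 j j' hj.1 hjj' hj'.2

/-- The entry in row `j` and column `i` of the filled Young diagram, the column coming first as in
`inColumn`. -/
def youngEntry (t r i j : ℕ) : ℕ := (r - j) * t + i

/-- The `i`-th part of the conjugate partition, that is, the length of column `i` of the Young
diagram of `lam`: its last row `j ≤ r` with `i ≤ lam j`, or `0` when it is empty. -/
def conjugatePart (r : ℕ) (lam : ℕ → ℕ) (i : ℕ) : ℕ := Nat.findGreatest (fun j => i ≤ lam j) r

/-- The facets of the `t`-Young complex, described by the rows of their elements: the row of
the column-`i` element is weakly decreasing in `i`. -/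
def youngFacets (t r : ℕ) (lam : ℕ → ℕ) : Set (Finset ℕ) :=
  antitoneSections (Finset.Icc 1 (lam 1)) (youngEntry t r) (fun _ => 1) (conjugatePart r lam)

lemma youngEntry_lt_succ_iff (ht : 0 < t) (hj' : j' ≤ r) :
    youngEntry t r i j < youngEntry t r (i + 1) j' ↔ j' ≤ j := by
  have hrows : j' ≤ j ↔ r - j ≤ r - j' := by omega
  rw [hrows, ← Nat.mul_le_mul_right_iff ht, youngEntry, youngEntry]
  omega

lemma strictMonoOn_youngEntry {s : Set ℕ} (hc : AntitoneOn c s) :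
    StrictMonoOn (fun i => youngEntry t r i (c i)) s := fun _ ha _ hb hab =>
  Nat.add_lt_add_of_le_of_lt
    (Nat.mul_le_mul_right t (Nat.sub_le_sub_left (hc ha hb hab.le) r)) hab

lemma sized_youngFacets (t r : ℕ) (lam : ℕ → ℕ) : (youngFacets t r lam).Sized (lam 1) := by
  rintro _ ⟨c, hc, -, rfl⟩
  rw [Finset.card_image_of_injOn (strictMonoOn_youngEntry hc).injOn, Nat.card_Icc,
    Nat.add_sub_cancel]

lemma conjugatePart_le (r : ℕ) (lam : ℕ → ℕ) (i : ℕ) : conjugatePart r lam i ≤ r :=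
  Nat.findGreatest_le r

lemma le_conjugatePart (hj : j ≤ r) (hij : i ≤ lam j) : j ≤ conjugatePart r lam i :=
  Nat.le_findGreatest hj hij

lemma antitone_conjugatePart (r : ℕ) (lam : ℕ → ℕ) : Antitone (conjugatePart r lam) :=
  fun _ _ hij => Nat.findGreatest_mono_left (fun _ => hij.trans) r

lemma le_part_of_le_conjugatePart (hlam : AntitoneOn lam (Set.Icc 1 r)) (hj : 1 ≤ j)
    (hij : j ≤ conjugatePart r lam i) : i ≤ lam j := by
  have hle := conjugatePart_le r lam i
  have hpos : conjugatePart r lam i ≠ 0 := by omega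
  have hspec : i ≤ lam (conjugatePart r lam i) :=
    Nat.findGreatest_of_ne_zero (P := fun j => i ≤ lam j) rfl hpos
  exact hspec.trans (hlam ⟨hj, hij.trans hle⟩ ⟨by omega, hle⟩ hij)

lemma youngComplex_eq_lowerClosure (ht : 0 < t) (hlam : AntitoneOn lam (Set.Icc 1 r)) :
    youngComplex t r lam = lowerClosure (youngFacets t r lam) := by
  ext F
  constructor
  · rintro ⟨a, hlt, hcol, hF⟩
    choose! c hc1 hcr hcl hac using hcol
    refine ⟨_, ⟨c, antitoneOn_of_add_one_le (by simpa using Set.ordConnected_Icc) ?_, ?_, ?_⟩, hF⟩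
    · intro i _ hi hi'
      rw [Finset.mem_coe, Finset.mem_Icc] at hi hi'
      have hstep := hlt i hi.1 hi'.2
      rw [hac i hi.1 hi.2, hac (i + 1) hi'.1 hi'.2] at hstep
      exact (youngEntry_lt_succ_iff ht (hcr (i + 1) hi'.1 hi'.2)).1 hstep
    · intro i hi
      rw [Finset.mem_Icc] at hi
      exact ⟨hc1 i hi.1 hi.2, le_conjugatePart (hcr i hi.1 hi.2) (hcl i hi.1 hi.2)⟩
    · refine Finset.image_congr fun i hi => ?_
      rw [Finset.mem_coe, Finset.mem_Icc] at hi
      exact hac i hi.1 hi.2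
  · rintro ⟨_, ⟨c, hanti, hc, rfl⟩, hF⟩
    refine ⟨fun i => youngEntry t r i (c i), fun i hi hin => ?_, fun i hi hin => ?_, hF⟩
    · exact strictMonoOn_youngEntry hanti (by simp; omega) (by simp; omega) i.lt_succ_self
    · obtain ⟨hc1, hcu⟩ := hc i (Finset.mem_Icc.2 ⟨hi, hin⟩)
      exact ⟨c i, hc1, hcu.trans (conjugatePart_le r lam i),
        le_part_of_le_conjugatePart hlam hc1 hcu, rfl⟩

lemma youngEntry_lt_of_row_lt (hjj' : j < j') (hj'r : j' ≤ r) (hi : 0 < i) {i' : ℕ} (hi' : i' ≤ t) :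
    youngEntry t r i' j' < youngEntry t r i j := by
  have hrow : (r - j' + 1) * t ≤ (r - j) * t := Nat.mul_le_mul_right t (by omega)
  rw [Nat.succ_mul] at hrow
  unfold youngEntry
  omega

lemma injOn_youngEntry (hlam : AntitoneOn lam (Set.Icc 1 r)) (ht : ∀ j ∈ Set.Icc 2 r, lam j ≤ t) :
    Set.InjOn (fun p => youngEntry t r p.1 p.2)
      (cells (Finset.Icc 1 (lam 1)) (fun _ => 1) (conjugatePart r lam) : Set (Σ _ : ℕ, ℕ)) := by
  rintro ⟨i, j⟩ hp ⟨i', j'⟩ hp' heq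
  simp only [Finset.mem_coe, mem_cells, Finset.mem_Icc, Set.mem_Icc] at hp hp' heq
  have hcolumn {i j k : ℕ} (hkj : k < j) (hk : 1 ≤ k) (hj : j ≤ conjugatePart r lam i) : i ≤ t :=
    (le_part_of_le_conjugatePart hlam (by omega) hj).trans
      (ht j ⟨by omega, hj.trans (conjugatePart_le r lam i)⟩)
  rcases lt_trichotomy j j' with hjj' | rfl | hjj'
  · exact absurd heq (youngEntry_lt_of_row_lt hjj' (hp'.2.2.trans (conjugatePart_le r lam i'))
      hp.1.1 (hcolumn hjj' hp.2.1 hp'.2.2)).ne'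
  · rw [Nat.add_left_cancel heq]
  · exact absurd heq (youngEntry_lt_of_row_lt hjj' (hp.2.2.trans (conjugatePart_le r lam i))
      hp'.1.1 (hcolumn hjj' hp'.2.1 hp.2.2)).ne

theorem vertexDecomposable_lowerClosure_youngFacets (hr : 1 ≤ r)
    (hlam : AntitoneOn lam (Set.Icc 1 r)) (ht : ∀ j ∈ Set.Icc 2 r, lam j ≤ t) :
    VertexDecomposable (lowerClosure (youngFacets t r lam) : Set (Finset ℕ)) :=
  vertexDecomposable_antitoneSections antitoneOn_const ((antitone_conjugatePart r lam).antitoneOn _)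
    (fun _ hi => le_conjugatePart hr (Finset.mem_Icc.1 hi).2) (injOn_youngEntry hlam ht)

/-- The face of the `t`-Young complex obtained from the first row of the diagram by removing the
columns `2, …, t + 1`; when `t < lam 2`, its link is disconnected. -/
def separatingFace (t r : ℕ) (lam : ℕ → ℕ) : Finset ℕ :=
  insert (youngEntry t r 1 1) (Finset.Icc (youngEntry t r (t + 2) 1) (youngEntry t r (lam 1) 1))

lemma card_separatingFace (h : t < lam 1) : (separatingFace t r lam).card = lam 1 - t := by
  rw [separatingFace, Finset.card_insert_of_notMem (by simp [youngEntry]), Nat.card_Icc]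
  unfold youngEntry
  omega

lemma lt_column_of_youngEntry_eq (hj : 2 ≤ j) (hjr : j ≤ r)
    (heq : youngEntry t r i j = youngEntry t r 1 1) : t < i := by
  by_contra! hi
  exact (youngEntry_lt_of_row_lt hj hjr one_pos hi).ne heq

lemma filter_gt_eq_of_separatingFace_subset {k : ℕ} (hanti : AntitoneOn c (Finset.Icc 1 (lam 1)))
    (hk : k ∈ Finset.Icc 1 (lam 1)) (htk : t < k)
    (hentry : youngEntry t r k (c k) = youngEntry t r 1 1)
    (hF : separatingFace t r lam ⊆ (Finset.Icc 1 (lam 1)).image fun i => youngEntry t r i (c i)) :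
    {x ∈ (Finset.Icc 1 (lam 1)).image fun i => youngEntry t r i (c i) | youngEntry t r 1 1 < x} =
      Finset.Icc (youngEntry t r (t + 2) 1) (youngEntry t r (lam 1) 1) := by
  have hmono := strictMonoOn_youngEntry (t := t) (r := r) hanti
  refine (Finset.eq_of_subset_of_card_le (fun x hx => Finset.mem_filter.2
    ⟨hF (Finset.mem_insert_of_mem hx), ?_⟩) ?_).symm
  · have := (Finset.mem_Icc.1 hx).1
    unfold youngEntry at this ⊢
    omega
  · have hsub : {x ∈ (Finset.Icc 1 (lam 1)).image fun i => youngEntry t r i (c i) |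
        youngEntry t r 1 1 < x} ⊆
        (Finset.Ioc k (lam 1)).image fun i => youngEntry t r i (c i) := by
      intro x hx
      obtain ⟨hx, hlt⟩ := Finset.mem_filter.1 hx
      obtain ⟨i, hi, rfl⟩ := Finset.mem_image.1 hx
      rw [← hentry] at hlt
      exact Finset.mem_image_of_mem _
        (Finset.mem_Ioc.2 ⟨(hmono.lt_iff_lt hk hi).1 hlt, (Finset.mem_Icc.1 hi).2⟩)
    refine (Finset.card_le_card hsub).trans (Finset.card_image_le.trans ?_)
    rw [Nat.card_Ioc, Nat.card_Icc]
    unfold youngEntry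
    omega

lemma separated_of_separatingFace_subset (hX : X ∈ youngFacets t r lam)
    (hF : separatingFace t r lam ⊆ X) :
    (∀ x ∈ X \ separatingFace t r lam, x < youngEntry t r 1 1) ∨
      (∀ x ∈ X \ separatingFace t r lam, ¬ x < youngEntry t r 1 1) := by
  obtain ⟨c, hanti, hc, rfl⟩ := hX
  have hmono := strictMonoOn_youngEntry (t := t) (r := r) hanti
  obtain ⟨k, hk, hentry⟩ := Finset.mem_image.1 (hF (Finset.mem_insert_self _ _))
  obtain ⟨hck, hcu⟩ := hc k hk
  rcases hck.eq_or_lt' with hrow | hrow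
  · right
    have hk1 : k = 1 := by
      rw [hrow] at hentry
      exact Nat.add_left_cancel hentry
    subst hk1
    intro x hx
    obtain ⟨i, hi, rfl⟩ := Finset.mem_image.1 (Finset.mem_sdiff.1 hx).1
    rw [not_lt, ← hentry]
    exact hmono.monotoneOn hk hi (Finset.mem_Icc.1 hi).1
  · left
    intro x hx
    obtain ⟨hxX, hxF⟩ := Finset.mem_sdiff.1 hx
    have htk := lt_column_of_youngEntry_eq hrow (hcu.trans (conjugatePart_le r lam k)) hentry
    have habove := filter_gt_eq_of_separatingFace_subset hanti hk htk hentry hF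
    by_contra! hge
    have hne : x ≠ youngEntry t r 1 1 := fun h => hxF (h ▸ Finset.mem_insert_self _ _)
    exact hxF (Finset.mem_insert_of_mem
      (habove ▸ Finset.mem_filter.2 ⟨hxX, hge.lt_of_ne' hne⟩))

lemma separatingFace_subset_image
    (hone : youngEntry t r 1 1 ∈ (Finset.Icc 1 (lam 1)).image fun i => youngEntry t r i (c i))
    (hrow : ∀ i, t + 2 ≤ i → c i = 1) :
    separatingFace t r lam ⊆ (Finset.Icc 1 (lam 1)).image fun i => youngEntry t r i (c i) := by
  refine Finset.insert_subset hone fun x hx => ?_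
  simp only [youngEntry, Finset.mem_Icc] at hx
  refine Finset.mem_image.2 ⟨x - (r - 1) * t, Finset.mem_Icc.2 (by omega), ?_⟩
  rw [hrow _ (by omega), youngEntry]
  omega

lemma exists_facet_above_separatingFace (hr : 1 ≤ r) (ht : 1 ≤ t) (h : 2 ≤ lam 1) :
    ∃ X ∈ youngFacets t r lam, separatingFace t r lam ⊆ X ∧
      ∃ x ∈ X \ separatingFace t r lam, ¬ x < youngEntry t r 1 1 := by
  have hmem {i : ℕ} (hi : 1 ≤ i) (hin : i ≤ lam 1) :
      youngEntry t r i 1 ∈ (Finset.Icc 1 (lam 1)).image fun i => youngEntry t r i 1 :=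
    Finset.mem_image_of_mem _ (Finset.mem_Icc.2 ⟨hi, hin⟩)
  refine ⟨_, ⟨fun _ => 1, antitoneOn_const, fun i hi =>
    ⟨le_rfl, le_conjugatePart hr (Finset.mem_Icc.1 hi).2⟩, rfl⟩,
    separatingFace_subset_image (hmem le_rfl (by omega)) fun _ _ => rfl, youngEntry t r 2 1,
    Finset.mem_sdiff.2 ⟨hmem one_le_two h, ?_⟩, ?_⟩
  · simp only [separatingFace, youngEntry, Finset.mem_insert, Finset.mem_Icc]
    omega
  · unfold youngEntry
    omega

lemma exists_facet_below_separatingFace (hr : 2 ≤ r) (ht : 1 ≤ t) (h : t < lam 2)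
    (h₂₁ : lam 2 ≤ lam 1) :
    ∃ X ∈ youngFacets t r lam, separatingFace t r lam ⊆ X ∧
      ∃ x ∈ X \ separatingFace t r lam, x < youngEntry t r 1 1 := by
  let c (i : ℕ) : ℕ := if i ≤ t + 1 then 2 else 1
  have hanti : Antitone c := fun i j hij => by grind
  have hc : ∀ i ∈ Finset.Icc 1 (lam 1), c i ∈ Set.Icc 1 (conjugatePart r lam i) := by
    intro i hi
    by_cases hit : i ≤ t + 1
    · simpa [c, hit] using le_conjugatePart hr (by omega)
    · simpa [c, hit] using le_conjugatePart (by omega) (Finset.mem_Icc.1 hi).2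
  have hmem {i : ℕ} (hi : 1 ≤ i) (hit : i ≤ t + 1) :
      youngEntry t r i 2 ∈ (Finset.Icc 1 (lam 1)).image fun i => youngEntry t r i (c i) :=
    Finset.mem_image.2 ⟨i, Finset.mem_Icc.2 (by omega), by simp only [c, if_pos hit]⟩
  have hrow : youngEntry t r 1 1 = youngEntry t r (t + 1) 2 := by
    have hsub : r - 1 = r - 2 + 1 := by omega
    rw [youngEntry, youngEntry, hsub]
    ring
  have hlt : youngEntry t r 1 2 < youngEntry t r 1 1 :=
    youngEntry_lt_of_row_lt one_lt_two hr one_pos ht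
  refine ⟨_, ⟨c, hanti.antitoneOn _, hc, rfl⟩,
    separatingFace_subset_image (hrow ▸ hmem (by omega) le_rfl)
      fun i hi => if_neg (by omega), youngEntry t r 1 2,
    Finset.mem_sdiff.2 ⟨hmem le_rfl (by omega), fun hF => ?_⟩, hlt⟩
  simp only [separatingFace, Finset.mem_insert, Finset.mem_Icc] at hF
  unfold youngEntry at hF hlt
  omega

theorem not_vertexDecomposable_lowerClosure_youngFacets (ht : 2 ≤ t) (hr : 2 ≤ r)
    (hlam : AntitoneOn lam (Set.Icc 1 r)) (h : t < lam 2) :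
    ¬ VertexDecomposable (lowerClosure (youngFacets t r lam) : Set (Finset ℕ)) := by
  have h₂₁ : lam 2 ≤ lam 1 := hlam ⟨le_rfl, by omega⟩ ⟨one_le_two, hr⟩ one_le_two
  refine not_vertexDecomposable_lowerClosure_of_separated (sized_youngFacets t r lam)
    {x | x < youngEntry t r 1 1} ?_ (fun X hX hF => separated_of_separatingFace_subset hX hF)
    (exists_facet_below_separatingFace hr (by omega) h h₂₁)
    (exists_facet_above_separatingFace (by omega) (by omega) (by omega))
  rw [card_separatingFace (h.trans_le h₂₁)]
  omega

end YoungComplex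

/-- For `t ≥ 2`, the `t`-Young complex `Δ_t^λ` is vertex-decomposable iff either
`r = 1`, or `r ≥ 2` and `λ_2 ≤ t`. -/
theorem youngComplex_vertexDecomposable_iff (t r : ℕ) (lam : ℕ → ℕ) (ht : 2 ≤ t)
    (hr : 1 ≤ r) (hlam : isPartition r lam) :
    VertexDecomposable (youngComplex t r lam) ↔
      r = 1 ∨ (2 ≤ r ∧ lam 2 ≤ t) := by
  have hanti := hlam.antitoneOn
  rw [youngComplex_eq_lowerClosure (by omega) hanti]
  constructor
  · intro hvd
    by_contra! hnot
    exact not_vertexDecomposable_lowerClosure_youngFacets ht (by omega) hanti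
      (hnot.2 (by omega)) hvd
  · intro h
    refine vertexDecomposable_lowerClosure_youngFacets hr hanti fun j hj => ?_
    obtain rfl | ⟨hr2, hlam2⟩ := h
    · exact absurd (hj.1.trans hj.2) (by decide)
    · exact (hanti ⟨one_le_two, hr2⟩ ⟨one_le_two.trans hj.1, hj.2⟩ hj.1).trans hlam2
end

section
/- Let t ≥ 2 be an integer and λ = (λ_1 ≥ λ_2 ≥ ⋯ ≥ λ_r ≥ 1) a partition. Then the t-Young complex Δ_t^λ is shellable if and only if either r = 1, or r ≥ 2 and λ_2 ≤ t. -/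
/-- A pure simplicial complex is shellable if its facets can be ordered
`F_1, …, F_m` so that for each `i ≥ 2` the intersection of `⟨F_1, …, F_{i-1}⟩` with
`⟨F_i⟩` is nonempty and generated by maximal proper faces of `F_i`. -/
def Shellable (Δ : Set (Finset ℕ)) : Prop :=
  ∃ (m : ℕ) (F : Fin m → Finset ℕ),
    Function.Injective F ∧
    (∀ G, isFacet Δ G ↔ ∃ i, F i = G) ∧
    ∀ i : Fin m, 0 < (i : ℕ) →
      (∃ x ∈ F i, ∃ j, j < i ∧ (F i).erase x ⊆ F j) ∧
      (∀ S, S ⊆ F i → (∃ j, j < i ∧ S ⊆ F j) →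
        ∃ x ∈ F i, S ⊆ (F i).erase x ∧ ∃ j, j < i ∧ (F i).erase x ⊆ F j)

/-!
If the columns of the filled diagram are pairwise disjoint, which is the case when `r = 1` or
`λ_2 ≤ t`, listing the facets by increasing sum of their elements is a shelling: given facets `a`
and `d` with `∑ d ≤ ∑ a`, replace `a_i` by `d_i` at the first `i` where `d_i < a_i`.

If `λ_2 > t`, the vertex `v = (r - 1)t + 1` lies both in column `1` and in column `t + 1`. A facet
that uses `v` in column `1` is forced to be the top row, while every other facet through `v` has at
least two elements below `v`, as `t ≥ 2`. So no other facet through `v` shares all but one element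
with the top row. In a shelling, however, every facet through `v` except the first one listed
shares all but one element with an earlier facet through `v`. Apply this to the top row or, if that
is the first, to the second facet through `v`.
-/

section Shellings

theorem exists_injective_range_eq_monotone_comp {α β : Type*} [LinearOrder β] {s : Set α}
    (hs : s.Finite) (w : α → β) :
    ∃ (m : ℕ) (F : Fin m → α),
      Function.Injective F ∧ Set.range F = s ∧ Monotone (w ∘ F) := by
  let e := hs.toFinset.equivFin.symm
  let σ := Tuple.sort fun i => w (e i)
  refine ⟨_, fun i => e (σ i), Subtype.val_injective.comp (e.injective.comp σ.injective), ?_,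
    Tuple.monotone_sort fun i => w (e i)⟩
  ext x
  constructor
  · rintro ⟨i, rfl⟩
    exact hs.mem_toFinset.1 (e (σ i)).2
  · intro hx
    exact ⟨σ.symm (e.symm ⟨x, hs.mem_toFinset.2 hx⟩), by simp⟩

theorem shellable_of_exchange {Δ : Set (Finset ℕ)} {β : Type*} [LinearOrder β]
    (hfin : {G | isFacet Δ G}.Finite) (w : Finset ℕ → β)
    (hexchange : ∀ C D, isFacet Δ C → isFacet Δ D → C ≠ D → w D ≤ w C →
      ∃ x ∈ C, x ∉ D ∧ ∃ E, isFacet Δ E ∧ w E < w C ∧ C.erase x ⊆ E) :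
    Shellable Δ := by
  obtain ⟨m, F, hinj, hrange, hmono⟩ := exists_injective_range_eq_monotone_comp hfin w
  have hfacet : ∀ G, isFacet Δ G ↔ ∃ i, F i = G := fun G => (Set.ext_iff.1 hrange G).symm
  have hstep : ∀ i, ∀ S ⊆ F i, (∃ j, j < i ∧ S ⊆ F j) →
      ∃ x ∈ F i, S ⊆ (F i).erase x ∧ ∃ j, j < i ∧ (F i).erase x ⊆ F j := by
    rintro i S hSi ⟨j, hji, hSj⟩
    obtain ⟨x, hxi, hxj, E, hE, hwE, hsub⟩ := hexchange (F i) (F j) ((hfacet _).2 ⟨i, rfl⟩)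
      ((hfacet _).2 ⟨j, rfl⟩) (hinj.ne hji.ne') (hmono hji.le)
    obtain ⟨k, rfl⟩ := (hfacet E).1 hE
    exact ⟨x, hxi, Finset.subset_erase.2 ⟨hSi, fun hxS => hxj (hSj hxS)⟩, k,
      hmono.reflect_lt hwE, hsub⟩
  refine ⟨m, F, hinj, hfacet, fun i hi => ⟨?_, hstep i⟩⟩
  obtain ⟨x, hx, -, h⟩ := hstep i ∅ (Finset.empty_subset _)
    ⟨⟨0, hi.trans i.2⟩, hi, Finset.empty_subset _⟩
  exact ⟨x, hx, h⟩

theorem card_sdiff_le_one_of_erase_subset {α : Type*} [DecidableEq α] {A E : Finset α} {x : α}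
    (h : A.erase x ⊆ E) : (A \ E).card ≤ 1 := by
  have hsub : A \ E ⊆ {x} := sdiff_le_comm.1 (Finset.erase_eq A x ▸ h)
  exact (Finset.card_le_card hsub).trans_eq (Finset.card_singleton x)

theorem Shellable.exists_adjacent_facet {Δ : Set (Finset ℕ)} (hΔ : Shellable Δ)
    {A B S : Finset ℕ} (hA : isFacet Δ A) (hB : isFacet Δ B) (hne : B ≠ A) (hSA : S ⊆ A)
    (hSB : S ⊆ B) :
    ∃ E, isFacet Δ E ∧ E ≠ A ∧ S ⊆ E ∧ ((A \ E).card ≤ 1 ∨ (E \ A).card ≤ 1) := by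
  obtain ⟨m, F, hinj, hfacet, hshell⟩ := hΔ
  obtain ⟨i, rfl⟩ := (hfacet A).1 hA
  obtain ⟨j, rfl⟩ := (hfacet B).1 hB
  -- The first facet other than `A` that contains `S`.
  obtain ⟨k, ⟨hki, hSk⟩, hmin⟩ := WellFounded.has_min (wellFounded_lt (α := Fin m))
    {k | k ≠ i ∧ S ⊆ F k} ⟨j, fun h => hne (h ▸ rfl), hSB⟩
  rcases hki.lt_or_gt with hlt | hlt
  · obtain ⟨x, -, hSx, l, hli, hsub⟩ := (hshell i (by omega)).2 S hSA ⟨k, hlt, hSk⟩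
    exact ⟨F l, (hfacet _).2 ⟨l, rfl⟩, hinj.ne hli.ne, hSx.trans hsub,
      .inl (card_sdiff_le_one_of_erase_subset hsub)⟩
  · obtain ⟨x, -, hSx, l, hlk, hsub⟩ := (hshell k (by omega)).2 S hSk ⟨i, hlt, hSA⟩
    obtain rfl : l = i := by
      by_contra hli
      exact hmin l ⟨hli, hSx.trans hsub⟩ hlk
    exact ⟨F k, (hfacet _).2 ⟨k, rfl⟩, hinj.ne hki, hSk,
      .inr (card_sdiff_le_one_of_erase_subset hsub)⟩

end Shellings

section Transversals

theorem exists_first_lt_of_sum_le {ι M : Type*} [LinearOrder ι] [AddCommMonoid M] [LinearOrder M]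
    [IsOrderedCancelAddMonoid M] {s : Finset ι} {a d : ι → M}
    (hsum : ∑ i ∈ s, d i ≤ ∑ i ∈ s, a i) (hne : ∃ i ∈ s, a i ≠ d i) :
    ∃ i ∈ s, d i < a i ∧ ∀ k ∈ s, k < i → a k ≤ d k := by
  have hex : {i ∈ s | d i < a i}.Nonempty := by
    rw [Finset.filter_nonempty_iff]
    by_contra! hle
    obtain ⟨i, hi, hadi⟩ := hne
    exact hsum.not_gt (Finset.sum_lt_sum hle ⟨i, hi, (hle i hi).lt_of_ne hadi⟩)
  obtain ⟨i, hi, hmin⟩ := Finset.exists_min_image _ id hex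
  obtain ⟨his, hlt⟩ := Finset.mem_filter.1 hi
  exact ⟨i, his, hlt, fun k hk hki => not_lt.1 fun hdk =>
    hki.not_ge (hmin k (Finset.mem_filter.2 ⟨hk, hdk⟩))⟩

/-- `a 1 < a 2 < ⋯ < a n` with `a i` in the column `K i`; only the values of `a` at `1, …, n`
matter. These sequences generate the facets of `transversalComplex n K`. -/
structure IsIncreasingTransversal (n : ℕ) (K : ℕ → Set ℕ) (a : ℕ → ℕ) : Prop where
  strictMonoOn : StrictMonoOn a (Set.Icc 1 n)
  mem : ∀ i ∈ Set.Icc 1 n, a i ∈ K i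

/-- The simplicial complex generated by the increasing transversals of the columns
`K 1, …, K n`. It isolates what shellability of the `t`-Young complex uses about the diagram, namely
that its columns are finite and pairwise disjoint. -/
def transversalComplex (n : ℕ) (K : ℕ → Set ℕ) : Set (Finset ℕ) :=
  {F | ∃ a, IsIncreasingTransversal n K a ∧ F ⊆ (Finset.Icc 1 n).image a}

variable {n : ℕ} {K : ℕ → Set ℕ} {a d : ℕ → ℕ}

namespace IsIncreasingTransversal

theorem injOn (ha : IsIncreasingTransversal n K a) : Set.InjOn a (Finset.Icc 1 n) := by
  simpa only [Finset.coe_Icc] using ha.strictMonoOn.injOn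

theorem card_image (ha : IsIncreasingTransversal n K a) :
    ((Finset.Icc 1 n).image a).card = n := by
  rw [Finset.card_image_of_injOn ha.injOn, Nat.card_Icc, Nat.add_sub_cancel]

theorem update (ha : IsIncreasingTransversal n K a) (hd : IsIncreasingTransversal n K d) {i : ℕ}
    (hi : i ∈ Set.Icc 1 n) (hlt : d i < a i) (hle : ∀ k ∈ Set.Icc 1 n, k < i → a k ≤ d k) :
    IsIncreasingTransversal n K (Function.update a i (d i)) where
  strictMonoOn j hj k hk hjk := by
    rcases eq_or_ne j i with rfl | hji
    · rw [Function.update_self, Function.update_of_ne hjk.ne']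
      exact hlt.trans (ha.strictMonoOn hj hk hjk)
    rw [Function.update_of_ne hji]
    rcases eq_or_ne k i with rfl | hki
    · rw [Function.update_self]
      exact (hle j hj hjk).trans_lt (hd.strictMonoOn hj hk hjk)
    · rw [Function.update_of_ne hki]
      exact ha.strictMonoOn hj hk hjk
  mem j hj := by
    rcases eq_or_ne j i with rfl | hji
    · rw [Function.update_self]
      exact hd.mem j hj
    · rw [Function.update_of_ne hji]
      exact ha.mem j hj

end IsIncreasingTransversal

theorem isFacet_transversalComplex_iff {G : Finset ℕ} :
    isFacet (transversalComplex n K) G ↔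
      ∃ a, IsIncreasingTransversal n K a ∧ (Finset.Icc 1 n).image a = G := by
  constructor
  · rintro ⟨⟨a, ha, hG⟩, hmax⟩
    exact ⟨a, ha, hmax _ ⟨a, ha, subset_rfl⟩ hG⟩
  · rintro ⟨a, ha, rfl⟩
    refine ⟨⟨a, ha, subset_rfl⟩, ?_⟩
    rintro G ⟨b, hb, hG⟩ hsub
    refine (Finset.eq_of_subset_of_card_le hsub ?_).symm
    rw [ha.card_image, ← hb.card_image]
    exact Finset.card_le_card hG

theorem card_eq_of_isFacet_transversalComplex {G : Finset ℕ}
    (hG : isFacet (transversalComplex n K) G) : G.card = n := by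
  obtain ⟨a, ha, rfl⟩ := isFacet_transversalComplex_iff.1 hG
  exact ha.card_image

theorem finite_setOf_isFacet_transversalComplex (hK : ∀ i ∈ Set.Icc 1 n, (K i).Finite) :
    {G | isFacet (transversalComplex n K) G}.Finite := by
  have hunion : (⋃ i ∈ Set.Icc 1 n, K i).Finite := (Set.finite_Icc 1 n).biUnion hK
  refine hunion.toFinset.powerset.finite_toSet.subset fun G hG => ?_
  obtain ⟨a, ha, rfl⟩ := isFacet_transversalComplex_iff.1 hG
  rw [Finset.mem_coe, Finset.mem_powerset, Finset.image_subset_iff]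
  intro i hi
  rw [Finset.mem_Icc] at hi
  exact hunion.mem_toFinset.2 (Set.mem_biUnion hi (ha.mem i hi))

theorem shellable_transversalComplex (hfin : ∀ i ∈ Set.Icc 1 n, (K i).Finite)
    (hdisj : (Set.Icc 1 n).PairwiseDisjoint K) : Shellable (transversalComplex n K) := by
  refine shellable_of_exchange (finite_setOf_isFacet_transversalComplex hfin)
    (fun G => ∑ x ∈ G, x) fun C D hC hD hne hsum => ?_
  obtain ⟨a, ha, rfl⟩ := isFacet_transversalComplex_iff.1 hC
  obtain ⟨d, hd, rfl⟩ := isFacet_transversalComplex_iff.1 hD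
  simp only [Finset.sum_image ha.injOn, Finset.sum_image hd.injOn] at hsum ⊢
  have hdiff : ∃ i ∈ Finset.Icc 1 n, a i ≠ d i := by
    contrapose! hne
    exact Finset.image_congr hne
  obtain ⟨i, hi', hlt, hle⟩ := exists_first_lt_of_sum_le hsum hdiff
  have hi : i ∈ Set.Icc 1 n := Finset.mem_Icc.1 hi'
  have hb := ha.update hd hi hlt fun k hk => hle k (Finset.mem_Icc.2 hk)
  refine ⟨a i, Finset.mem_image_of_mem a hi', ?_, _,
    isFacet_transversalComplex_iff.2 ⟨_, hb, rfl⟩, ?_, ?_⟩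
  · intro hmem
    obtain ⟨k, hk, hdk⟩ := Finset.mem_image.1 hmem
    rw [Finset.mem_Icc] at hk
    have hki : k = i := hdisj.elim_set hk hi (a i) (hdk ▸ hd.mem k hk) (ha.mem i hi)
    exact hlt.ne (hki ▸ hdk)
  · rw [Finset.sum_image hb.injOn]
    refine Finset.sum_lt_sum (fun k _ => ?_) ⟨i, hi', by rwa [Function.update_self]⟩
    exact update_le_self_iff.2 hlt.le k
  · intro y hy
    obtain ⟨hyi, hy⟩ := Finset.mem_erase.1 hy
    obtain ⟨k, hk, rfl⟩ := Finset.mem_image.1 hy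
    exact Finset.mem_image.2 ⟨k, hk, Function.update_of_ne (ne_of_apply_ne a hyi) _ _⟩

end Transversals

section Columns

variable {t r : ℕ} {lam : ℕ → ℕ}

theorem youngComplex_eq_transversalComplex (t r : ℕ) (lam : ℕ → ℕ) :
    youngComplex t r lam = transversalComplex (lam 1) fun i => {a | inColumn t r lam i a} := by
  ext F
  constructor
  · rintro ⟨a, hlt, hcol, hF⟩
    refine ⟨a, ⟨?_, fun i hi => hcol i hi.1 hi.2⟩, hF⟩
    exact strictMonoOn_of_lt_add_one Set.ordConnected_Icc fun i _ hi hi' => hlt i hi.1 hi'.2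
  · rintro ⟨a, ha, hF⟩
    refine ⟨a, fun i hi hin => ?_, fun i hi hin => ha.mem i ⟨hi, hin⟩, hF⟩
    exact ha.strictMonoOn ⟨hi, hin.le⟩ ⟨by omega, hin⟩ i.lt_succ_self

theorem finite_setOf_inColumn (t r : ℕ) (lam : ℕ → ℕ) (i : ℕ) :
    {a | inColumn t r lam i a}.Finite := by
  refine ((Set.finite_Icc 1 r).image fun j => (r - j) * t + i).subset ?_
  rintro _ ⟨j, hj, hjr, -, rfl⟩
  exact ⟨j, ⟨hj, hjr⟩, rfl⟩

theorem entry_lt_entry_of_row_lt {i j k l : ℕ} (hi : 1 ≤ i) (hkt : k ≤ t) (hjl : j < l)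
    (hlr : l ≤ r) :
    (r - l) * t + k < (r - j) * t + i := by
  have hrows : (r - l + 1) * t ≤ (r - j) * t := Nat.mul_le_mul_right t (by omega)
  rw [Nat.succ_mul] at hrows
  omega

theorem inColumn_unique (hrow : ∀ j, 2 ≤ j → j ≤ r → lam j ≤ t) {i k x : ℕ} (hi : 1 ≤ i)
    (hk : 1 ≤ k) (hix : inColumn t r lam i x) (hkx : inColumn t r lam k x) : i = k := by
  obtain ⟨j, hj, hjr, hij, rfl⟩ := hix
  obtain ⟨l, hl, hlr, hkl, heq⟩ := hkx
  rcases lt_trichotomy j l with hjl | rfl | hlj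
  · exact absurd heq (entry_lt_entry_of_row_lt hi (hkl.trans (hrow l (by omega) hlr)) hjl hlr).ne'
  · exact Nat.add_left_cancel heq
  · exact absurd heq (entry_lt_entry_of_row_lt hk (hij.trans (hrow j (by omega) hjr)) hlj hjr).ne

theorem shellable_youngComplex_of_row_le (hrow : ∀ j, 2 ≤ j → j ≤ r → lam j ≤ t) :
    Shellable (youngComplex t r lam) := by
  rw [youngComplex_eq_transversalComplex]
  refine shellable_transversalComplex (fun i _ => finite_setOf_inColumn t r lam i) ?_
  intro i hi k hk hik
  exact Set.disjoint_left.2 fun x hix hkx => hik (inColumn_unique hrow hi.1 hk.1 hix hkx)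

theorem inColumn_le {i x : ℕ} (hx : inColumn t r lam i x) : x ≤ (r - 1) * t + i := by
  obtain ⟨j, hj, -, -, rfl⟩ := hx
  gcongr

theorem eq_one_or_lt_of_inColumn {l : ℕ} (h : inColumn t r lam l ((r - 1) * t + 1)) :
    l = 1 ∨ t < l := by
  obtain ⟨j, hj, hjr, -, heq⟩ := h
  rcases hj.eq_or_lt with rfl | hj
  · exact .inl (Nat.add_left_cancel heq).symm
  · have hrows : (r - j + 1) * t ≤ (r - 1) * t := Nat.mul_le_mul_right t (by omega)
    rw [Nat.succ_mul] at hrows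
    omega

end Columns

section TopRow

/-- The facet formed by the entries of the first row, the reference facet to which no other facet
through its least vertex is adjacent when `λ_2 > t`. -/
def topRow (t r : ℕ) (lam : ℕ → ℕ) : Finset ℕ :=
  Finset.Icc ((r - 1) * t + 1) ((r - 1) * t + lam 1)

variable {t r : ℕ} {lam : ℕ → ℕ}

theorem isFacet_youngComplex_iff {G : Finset ℕ} :
    isFacet (youngComplex t r lam) G ↔ ∃ a, IsIncreasingTransversal (lam 1)
      (fun i => {x | inColumn t r lam i x}) a ∧ (Finset.Icc 1 (lam 1)).image a = G := by
  rw [youngComplex_eq_transversalComplex, isFacet_transversalComplex_iff]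

theorem isFacet_topRow (hr : 1 ≤ r) : isFacet (youngComplex t r lam) (topRow t r lam) :=
  isFacet_youngComplex_iff.2 ⟨fun i => (r - 1) * t + i,
    ⟨fun _ _ _ _ hij => Nat.add_lt_add_left hij _, fun _ hi => ⟨1, le_rfl, hr, hi.2, rfl⟩⟩,
    Finset.image_add_left_Icc 1 (lam 1) ((r - 1) * t)⟩

theorem exists_isFacet_ne_topRow (hr : 2 ≤ r) (ht : 1 ≤ t) (h12 : lam 2 ≤ lam 1)
    (hlt : t < lam 2) :
    ∃ B, isFacet (youngComplex t r lam) B ∧ B ≠ topRow t r lam ∧ (r - 1) * t + 1 ∈ B := by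
  have hrow : (r - 1) * t = (r - 2) * t + t := by
    rw [← Nat.succ_mul]
    congr 1
    omega
  let b : ℕ → ℕ := fun i => if i ≤ lam 2 then (r - 2) * t + i else (r - 1) * t + i
  have hb : ∀ i, i ≤ lam 2 → b i = (r - 2) * t + i := fun i hi => if_pos hi
  refine ⟨(Finset.Icc 1 (lam 1)).image b, isFacet_youngComplex_iff.2 ⟨b, ⟨?_, ?_⟩, rfl⟩, ?_, ?_⟩
  · intro i _ k _ hik
    dsimp only [b]
    split_ifs <;> omega
  · intro i hi
    dsimp only [b]
    split_ifs with hi2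
    · exact ⟨2, one_le_two, hr, hi2, rfl⟩
    · exact ⟨1, le_rfl, by omega, hi.2, rfl⟩
  · intro heq
    have hb1 : b 1 ∈ topRow t r lam :=
      heq ▸ Finset.mem_image_of_mem b (Finset.mem_Icc.2 ⟨le_rfl, by omega⟩)
    rw [hb 1 (by omega), topRow, Finset.mem_Icc] at hb1
    omega
  · refine Finset.mem_image.2 ⟨t + 1, Finset.mem_Icc.2 ⟨by omega, by omega⟩, ?_⟩
    rw [hb (t + 1) hlt]
    omega

theorem image_eq_topRow {a : ℕ → ℕ}
    (ha : IsIncreasingTransversal (lam 1) (fun i => {x | inColumn t r lam i x}) a)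
    (ha1 : a 1 = (r - 1) * t + 1) : (Finset.Icc 1 (lam 1)).image a = topRow t r lam := by
  rw [topRow, ← Finset.image_add_left_Icc]
  refine Finset.image_congr fun k hk => ?_
  rw [Finset.coe_Icc] at hk
  refine le_antisymm (inColumn_le (ha.mem k hk)) ?_
  obtain ⟨hk1, hkn⟩ := hk
  induction k, hk1 using Nat.le_induction with
  | base => exact ha1.ge
  | succ k hk1 ih =>
    exact (ih (by omega)).trans_lt
      (ha.strictMonoOn ⟨hk1, by omega⟩ ⟨by omega, hkn⟩ k.lt_succ_self)

theorem two_le_card_sdiff_topRow (ht : 2 ≤ t) {E : Finset ℕ}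
    (hE : isFacet (youngComplex t r lam) E) (hne : E ≠ topRow t r lam)
    (hv : (r - 1) * t + 1 ∈ E) : 2 ≤ (E \ topRow t r lam).card := by
  obtain ⟨a, ha, rfl⟩ := isFacet_youngComplex_iff.1 hE
  obtain ⟨l, hl, hal⟩ := Finset.mem_image.1 hv
  rw [Finset.mem_Icc] at hl
  rcases eq_one_or_lt_of_inColumn (hal ▸ ha.mem l hl) with rfl | htl
  · exact absurd (image_eq_topRow ha hal) hne
  have h12 : a 1 < a 2 := ha.strictMonoOn ⟨le_rfl, by omega⟩ ⟨by omega, by omega⟩ one_lt_two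
  have h2l : a 2 < a l := ha.strictMonoOn ⟨by omega, by omega⟩ hl (by omega)
  have hmem : ∀ i ∈ Finset.Icc 1 (lam 1), a i < a l →
      a i ∈ (Finset.Icc 1 (lam 1)).image a \ topRow t r lam := fun i hi hil =>
    Finset.mem_sdiff.2 ⟨Finset.mem_image_of_mem a hi, fun h =>
      (hal ▸ hil).not_ge (Finset.mem_Icc.1 h).1⟩
  exact Finset.one_lt_card.2
    ⟨a 1, hmem 1 (Finset.mem_Icc.2 ⟨le_rfl, by omega⟩) (h12.trans h2l),
      a 2, hmem 2 (Finset.mem_Icc.2 ⟨by omega, by omega⟩) h2l, h12.ne⟩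

theorem not_shellable_youngComplex_of_lt (ht : 2 ≤ t) (hr : 2 ≤ r) (h12 : lam 2 ≤ lam 1)
    (hlt : t < lam 2) : ¬ Shellable (youngComplex t r lam) := by
  intro hshell
  have hA : isFacet (youngComplex t r lam) (topRow t r lam) := isFacet_topRow (by omega)
  obtain ⟨B, hB, hBA, hvB⟩ := exists_isFacet_ne_topRow hr (by omega) h12 hlt
  have hvA : (r - 1) * t + 1 ∈ topRow t r lam := Finset.mem_Icc.2 ⟨le_rfl, by omega⟩
  obtain ⟨E, hE, hEA, hvE, hadj⟩ := hshell.exists_adjacent_facet hA hB hBA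
    (Finset.singleton_subset_iff.2 hvA) (Finset.singleton_subset_iff.2 hvB)
  have hfar := two_le_card_sdiff_topRow ht hE hEA (Finset.singleton_subset_iff.1 hvE)
  rw [youngComplex_eq_transversalComplex] at hA hE
  have hcard : (topRow t r lam \ E).card = (E \ topRow t r lam).card :=
    Finset.card_sdiff_comm ((card_eq_of_isFacet_transversalComplex hA).trans
      (card_eq_of_isFacet_transversalComplex hE).symm)
  omega

end TopRow

/-- For `t ≥ 2`, the `t`-Young complex `Δ_t^λ` is shellable iff either `r = 1`,
or `r ≥ 2` and `λ_2 ≤ t`. -/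
theorem youngComplex_shellable_iff (t r : ℕ) (lam : ℕ → ℕ) (ht : 2 ≤ t)
    (hr : 1 ≤ r) (hlam : isPartition r lam) :
    Shellable (youngComplex t r lam) ↔ r = 1 ∨ (2 ≤ r ∧ lam 2 ≤ t) := by
  constructor
  · contrapose!
    rintro ⟨hr1, hlt⟩
    have hr2 : 2 ≤ r := by omega
    exact not_shellable_youngComplex_of_lt ht hr2 (hlam.2 1 2 le_rfl one_le_two hr2) (hlt hr2)
  · intro h
    refine shellable_youngComplex_of_row_le fun j hj hjr => ?_
    obtain rfl | ⟨-, h2⟩ := h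
    · omega
    · exact (hlam.2 2 j one_le_two hj hjr).trans h2
end

section
/- Let t ≥ 1 be an integer and λ = (λ_1 ≥ λ_2 ≥ ⋯ ≥ λ_r ≥ 1) a partition with r ≥ 2 and λ_1 = λ_2 > t, and set n = (r−1)t + λ_1. Then the subcomplex of the t-Young complex Δ_t^λ consisting of all faces disjoint from the last t entries of the top row, namely {F ∈ Δ_t^λ : F ∩ {n−t+1, n−t+2, …, n} = ∅}, is equal to the t-Young complex Δ_t^{λ'}, where λ' = (λ_2, λ_3, …, λ_r). -/
/-!
Since `λ_1 = λ_2`, every top-row entry has the entry `t` smaller below it. Replacing each top-row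
entry of a generator of `Δ_t^λ` by the entry below it gives a generator of `Δ_t^{λ'}`. No vertex
outside the last `t` of the top row is lost: if `a_i = (r-1)t + i` lies in the top row and
`i + t ≤ λ_1`, then strict monotonicity forces `a_{i+t} = a_i + t`, which also lies in the top row,
and is lowered to `a_i`.
-/

theorem add_le_apply_add_of_lt_succ {f : ℕ → ℕ} {i k : ℕ}
    (hf : ∀ j, i ≤ j → j < i + k → f j < f (j + 1)) : f i + k ≤ f (i + k) := by
  induction k with
  | zero => exact le_rfl
  | succ k ih =>
    calc f i + (k + 1) ≤ f (i + k) + 1 :=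
          Nat.succ_le_succ (ih fun j hij hjk => hf j hij (hjk.trans (Nat.lt_succ_self _)))
      _ ≤ f (i + (k + 1)) := hf (i + k) (Nat.le_add_right _ _) (Nat.lt_succ_self _)

section Columns

variable {t r i x : ℕ} {lam : ℕ → ℕ}

theorem inColumn_add_one_iff :
    inColumn t (r + 1) lam i x ↔
      (i ≤ lam 1 ∧ x = r * t + i) ∨ inColumn t r (fun j => lam (j + 1)) i x := by
  constructor
  · rintro ⟨j, hj, hjr, hij, hx⟩
    obtain ⟨j, rfl⟩ := Nat.exists_eq_add_of_le' hj
    rcases j.eq_zero_or_pos with rfl | hj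
    · exact .inl ⟨hij, by simpa using hx⟩
    · exact .inr ⟨j, hj, by omega, hij, by simpa using hx⟩
  · rintro (⟨hi, hx⟩ | ⟨j, hj, hjr, hij, hx⟩)
    · exact ⟨1, le_rfl, Nat.le_add_left _ _, hi, by simpa using hx⟩
    · exact ⟨j + 1, by omega, by omega, hij, by simpa using hx⟩

theorem inColumn.le_mul_add (hx : inColumn t (r + 1) lam i x) : x ≤ r * t + i := by
  obtain ⟨j, hj, -, -, rfl⟩ := hx
  gcongr
  omega

theorem inColumn.min_tail (hi : i ≤ lam 2) (hx : inColumn t (r + 2) lam i x) :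
    inColumn t (r + 1) (fun j => lam (j + 1)) i (min x (r * t + i)) := by
  rcases inColumn_add_one_iff.mp hx with ⟨-, rfl⟩ | hx
  · rw [min_eq_right (by gcongr; omega)]
    exact inColumn_add_one_iff.mpr (.inl ⟨hi, rfl⟩)
  · rwa [min_eq_left hx.le_mul_add]

end Columns

/-- `a` is a strictly increasing choice of one entry from each of the columns `1, …, λ_1` of the
filled Young diagram of `λ`, so that its values form a generator of `Δ_t^λ`. Values of `a` outside
`{1, …, λ_1}` are ignored. -/
def IsColumnSelection (t r : ℕ) (lam a : ℕ → ℕ) : Prop :=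
  (∀ i, 1 ≤ i → i < lam 1 → a i < a (i + 1)) ∧
    ∀ i, 1 ≤ i → i ≤ lam 1 → inColumn t r lam i (a i)

/-- The column selection obtained from `a`, in a diagram with `r + 2` rows, by replacing each
top-row entry `(r + 1) * t + i` by the entry `r * t + i` below it. As entries of lower rows are at
most `r * t + i`, this is a pointwise minimum. -/
def lowerTopRow (t r : ℕ) (a : ℕ → ℕ) (i : ℕ) : ℕ :=
  min (a i) (r * t + i)

theorem mem_youngComplex_iff {t r : ℕ} {lam : ℕ → ℕ} {F : Finset ℕ} :
    F ∈ youngComplex t r lam ↔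
      ∃ a, IsColumnSelection t r lam a ∧ F ⊆ Finset.image a (Finset.Icc 1 (lam 1)) :=
  exists_congr fun _ => and_assoc.symm

namespace IsColumnSelection

variable {t r x : ℕ} {lam a : ℕ → ℕ}

theorem of_tail (h12 : lam 1 ≤ lam 2)
    (ha : IsColumnSelection t r (fun j => lam (j + 1)) a) :
    IsColumnSelection t (r + 1) lam a :=
  ⟨fun i hi hlt => ha.1 i hi (hlt.trans_le h12),
    fun i hi hle => inColumn_add_one_iff.mpr (.inr (ha.2 i hi (hle.trans h12)))⟩

theorem lowerTopRow_tail (h21 : lam 2 ≤ lam 1) (ha : IsColumnSelection t (r + 2) lam a) :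
    IsColumnSelection t (r + 1) (fun j => lam (j + 1)) (lowerTopRow t r a) :=
  ⟨fun i hi hlt => min_lt_min (ha.1 i hi (hlt.trans_le h21)) (Nat.lt_succ_self _),
    fun i hi hle => (ha.2 i hi (hle.trans h21)).min_tail hle⟩

theorem mem_image_lowerTopRow (ha : IsColumnSelection t (r + 2) lam a)
    (hx : x ∈ Finset.image a (Finset.Icc 1 (lam 1))) (hxle : x ≤ r * t + lam 1) :
    x ∈ Finset.image (lowerTopRow t r a) (Finset.Icc 1 (lam 1)) := by
  obtain ⟨i, hi, rfl⟩ := Finset.mem_image.mp hx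
  obtain ⟨hi1, hile⟩ := Finset.mem_Icc.mp hi
  rcases inColumn_add_one_iff.mp (ha.2 i hi1 hile) with ⟨-, htop⟩ | htail
  · have hai : a i = r * t + (i + t) := by rw [htop]; ring
    have hit : i + t ≤ lam 1 := by omega
    have hgrow : a i + t ≤ a (i + t) :=
      add_le_apply_add_of_lt_succ fun j hij hjt => ha.1 j (hi1.trans hij) (hjt.trans_le hit)
    have hlower : lowerTopRow t r a (i + t) = a i := by
      rw [lowerTopRow, ← hai, min_eq_right ((Nat.le_add_right _ _).trans hgrow)]
    exact Finset.mem_image.mpr ⟨i + t, Finset.mem_Icc.mpr ⟨by omega, hit⟩, hlower⟩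
  · exact Finset.mem_image.mpr ⟨i, hi, min_eq_left htail.le_mul_add⟩

end IsColumnSelection

section Faces

variable {t r x : ℕ} {lam : ℕ → ℕ} {F : Finset ℕ}

theorem le_of_mem_of_mem_youngComplex (hF : F ∈ youngComplex t (r + 1) lam) (hx : x ∈ F) :
    x ≤ r * t + lam 1 := by
  obtain ⟨a, ha, hFa⟩ := mem_youngComplex_iff.mp hF
  obtain ⟨i, hi, rfl⟩ := Finset.mem_image.mp (hFa hx)
  obtain ⟨hi1, hile⟩ := Finset.mem_Icc.mp hi
  exact (ha.2 i hi1 hile).le_mul_add.trans (Nat.add_le_add_left hile _)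

theorem mem_youngComplex_tail_iff (h12 : lam 1 = lam 2) :
    F ∈ youngComplex t (r + 1) (fun j => lam (j + 1)) ↔
      F ∈ youngComplex t (r + 2) lam ∧ ∀ x ∈ F, x ≤ r * t + lam 1 := by
  constructor
  · intro hF
    refine ⟨?_, fun x hx => h12 ▸ le_of_mem_of_mem_youngComplex hF hx⟩
    obtain ⟨a, ha, hFa⟩ := mem_youngComplex_iff.mp hF
    exact mem_youngComplex_iff.mpr ⟨a, ha.of_tail h12.le, h12 ▸ hFa⟩
  · rintro ⟨hF, hle⟩
    obtain ⟨a, ha, hFa⟩ := mem_youngComplex_iff.mp hF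
    have hFlower : F ⊆ Finset.image (lowerTopRow t r a) (Finset.Icc 1 (lam 1)) :=
      fun x hx => ha.mem_image_lowerTopRow (hFa hx) (hle x hx)
    exact mem_youngComplex_iff.mpr ⟨_, ha.lowerTopRow_tail h12.ge, h12 ▸ hFlower⟩

theorem inter_Icc_eq_empty_iff_of_mem_youngComplex (hF : F ∈ youngComplex t (r + 2) lam) :
    F ∩ Finset.Icc (r * t + lam 1 + 1) ((r + 1) * t + lam 1) = ∅ ↔
      ∀ x ∈ F, x ≤ r * t + lam 1 := by
  rw [← Finset.disjoint_iff_inter_eq_empty, Finset.disjoint_left]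
  refine forall₂_congr fun x hx => ?_
  have hxn : x ≤ (r + 1) * t + lam 1 := le_of_mem_of_mem_youngComplex hF hx
  rw [Finset.mem_Icc, Nat.succ_le_iff, and_iff_left hxn, not_lt]

end Faces

theorem youngComplex_deleteTopRow_large_general (t r : ℕ) (lam : ℕ → ℕ) (hr : 2 ≤ r)
    (h12 : lam 1 = lam 2) :
    { F | F ∈ youngComplex t r lam ∧
        F ∩ Finset.Icc ((r - 1) * t + lam 1 - t + 1) ((r - 1) * t + lam 1) = ∅ } =
      youngComplex t (r - 1) (fun j => lam (j + 1)) := by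
  obtain ⟨r, rfl⟩ := Nat.exists_eq_add_of_le' hr
  have hsub : (r + 1) * t + lam 1 - t = r * t + lam 1 := by
    rw [Nat.succ_mul]
    omega
  ext F
  rw [show r + 2 - 1 = r + 1 from rfl, hsub, mem_youngComplex_tail_iff h12]
  exact and_congr_right inter_Icc_eq_empty_iff_of_mem_youngComplex

/-- For a partition `λ` with `r ≥ 2` parts, `λ_1 = λ_2` and `λ_1 > t`, setting
`n = (r-1)t + λ_1`, the subcomplex of `Δ_t^λ` of faces disjoint from the last `t`
entries `{n-t+1, …, n}` of the top row equals the `t`-Young complex of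
`λ' = (λ_2, …, λ_r)`. -/
theorem youngComplex_deleteTopRow_large (t r : ℕ) (lam : ℕ → ℕ) (ht : 1 ≤ t)
    (hr : 2 ≤ r) (hlam : isPartition r lam) (h12 : lam 1 = lam 2) (hgt : t < lam 1) :
    { F | F ∈ youngComplex t r lam ∧
        F ∩ Finset.Icc ((r - 1) * t + lam 1 - t + 1) ((r - 1) * t + lam 1) = ∅ } =
      youngComplex t (r - 1) (fun j => lam (j + 1)) :=
  youngComplex_deleteTopRow_large_general t r lam hr h12
end

section
/- Let n, k, t be positive integers and let i be an integer with 1 ≤ i ≤ k and it ≤ n. Then χ_t(n − it, k+1−i) ≤ χ_t(n, k+1). -/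
/-- `χ_t(n,k)`: `0` if `n < kt`; `n - kt + 1` if `kt ≤ n ≤ k(t+1)`;
`2(n-d)/(t+1) - k + 1` if `n > k(t+1)` and `n ≡ d (mod t+1)` with `0 ≤ d ≤ t-1`;
`2(n+1)/(t+1) - k` if `n > k(t+1)` and `n ≡ t (mod t+1)`
(here `d = n % (t+1)`, and the divisions by `t+1` are exact). -/
def chi (t n k : ℕ) : ℕ :=
  if n < k * t then 0
  else if n ≤ k * (t + 1) then n - k * t + 1
  else if n % (t + 1) = t then 2 * (n + 1) / (t + 1) - k
  else 2 * (n - n % (t + 1)) / (t + 1) - k + 1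

/-!
For `n > k (t + 1)` one has `χ_t(n, k) = ⌊n / (t + 1)⌋ + ⌊(n + 1) / (t + 1)⌋ + 1 - k`, because the
second floor exceeds the first exactly when `n ≡ t (mod t + 1)`. For `t > 0` this formula also
agrees with the middle one, `n - k t + 1`, at `n = k (t + 1)`. Passing from `(n, k)` to
`(n + t, k + 1)` leaves the middle formula unchanged, and for the formula with floors it comes down
to `⌊(n + 1) / (t + 1)⌋ ≤ ⌊(n + t) / (t + 1)⌋`. Any `n > k (t + 1)` satisfies
`n + t ≥ (k + 1) (t + 1)`, so no mixed case arises. Iterating this step `i` times gives the claim.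
-/

theorem chi_of_lt {t n k : ℕ} (h : n < k * t) : chi t n k = 0 :=
  if_pos h

theorem chi_of_mul_le_of_le_mul_add_one {t n k : ℕ} (h₁ : k * t ≤ n) (h₂ : n ≤ k * (t + 1)) :
    chi t n k = n - k * t + 1 := by
  rw [chi, if_neg h₁.not_gt, if_pos h₂]

theorem chi_of_mul_add_one_lt {t n k : ℕ} (h : k * (t + 1) < n) :
    chi t n k = n / (t + 1) + (n + 1) / (t + 1) + 1 - k := by
  have hkn : k * t ≤ n := (Nat.mul_le_mul_left k t.le_succ).trans h.le
  have hk : k ≤ n / (t + 1) := (Nat.le_div_iff_mul_le t.succ_pos).2 h.le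
  have hdvd : t + 1 ∣ n + 1 ↔ n % (t + 1) = t :=
    Nat.dvd_iff_mod_eq_zero.trans Nat.succ_mod_succ_eq_zero_iff
  rw [chi, if_neg hkn.not_gt, if_neg h.not_ge]
  split_ifs with hmod
  · rw [Nat.mul_div_assoc 2 (hdvd.2 hmod), Nat.succ_div_of_dvd (hdvd.2 hmod)]
    lia
  · rw [Nat.mul_div_assoc 2 (Nat.dvd_sub_mod n), ← Nat.div_eq_sub_mod_div,
      Nat.succ_div_of_not_dvd (hdvd.not.2 hmod)]
    lia

theorem chi_of_mul_add_one_le {t n k : ℕ} (ht : 0 < t) (h : k * (t + 1) ≤ n) :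
    chi t n k = n / (t + 1) + (n + 1) / (t + 1) + 1 - k := by
  obtain rfl | hlt := h.eq_or_lt
  · have hdiv : k * (t + 1) / (t + 1) = k := Nat.mul_div_cancel k t.succ_pos
    have hsucc_div : (k * (t + 1) + 1) / (t + 1) = k := by
      rw [mul_comm, Nat.mul_add_div t.succ_pos, Nat.div_eq_of_lt (by lia), add_zero]
    rw [chi_of_mul_le_of_le_mul_add_one (Nat.mul_le_mul_left k t.le_succ) le_rfl, hdiv,
      hsucc_div]
    lia
  · exact chi_of_mul_add_one_lt hlt

theorem chi_le_chi_add_add_one {t : ℕ} (ht : 0 < t) (n k : ℕ) :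
    chi t n k ≤ chi t (n + t) (k + 1) := by
  obtain hlt | hle := lt_or_ge n (k * t)
  · exact (chi_of_lt hlt).trans_le (Nat.zero_le _)
  obtain hle' | hlt' := le_or_gt n (k * (t + 1))
  · rw [chi_of_mul_le_of_le_mul_add_one hle hle',
      chi_of_mul_le_of_le_mul_add_one (by lia) (by lia), add_one_mul, Nat.add_sub_add_right]
  · rw [chi_of_mul_add_one_lt hlt', chi_of_mul_add_one_le ht (by lia), add_assoc n t 1,
      Nat.add_div_right n t.succ_pos]
    have hdiv : (n + 1) / (t + 1) ≤ (n + t) / (t + 1) :=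
      Nat.div_le_div_right (Nat.add_le_add_left ht n)
    lia

theorem monotone_chi_add_mul {t : ℕ} (ht : 0 < t) (n k : ℕ) :
    Monotone fun i => chi t (n + i * t) (k + i) :=
  monotone_nat_of_le_succ fun i => by
    simpa only [add_one_mul, add_assoc] using chi_le_chi_add_add_one ht (n + i * t) (k + i)

/-- `χ_t(n - it, k + 1 - i) ≤ χ_t(n, k + 1)` for `1 ≤ i ≤ k`. -/
theorem chi_sub_mul_le (n k t i : ℕ) (hn : 1 ≤ n) (hk : 1 ≤ k) (ht : 1 ≤ t)
    (hi1 : 1 ≤ i) (hik : i ≤ k) (hit : i * t ≤ n) :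
    chi t (n - i * t) (k + 1 - i) ≤ chi t n (k + 1) := by
  have hle := monotone_chi_add_mul ht (n - i * t) (k + 1 - i) i.zero_le
  simpa only [zero_mul, add_zero, Nat.sub_add_cancel hit,
    Nat.sub_add_cancel (hik.trans k.le_succ)] using hle
end

section
/- Let t ≥ 2, k ≥ 1 and n be integers with n ≥ (k+1)t. Then χ_t(n − (t+1), k) ≤ χ_t(n, k+1) − 1. -/
/-! Above the line `n = k(t+1)` the two residue cases of `χ_t(n,k)` merge into the single formula
`⌊n/(t+1)⌋ + ⌊(n+1)/(t+1)⌋ + 1 - k`; from that line down to `n = kt - 1`, where `χ_t` first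
vanishes, it is `n + 1 - kt`. The shift `(n,k) ↦ (n+t+1,k+1)` preserves both regions and raises both
formulas by exactly one, so the inequality is in fact an equality. -/

section

variable {t k n : ℕ}

lemma chi_add_mul_of_le (hlower : k * t ≤ n + 1) (hupper : n ≤ k * (t + 1)) :
    chi t n k + k * t = n + 1 := by
  unfold chi
  split_ifs <;> omega

lemma chi_add_of_lt (hlt : k * (t + 1) < n) :
    chi t n k + k = n / (t + 1) + (n + 1) / (t + 1) + 1 := by
  have hkt : k * t < n := (Nat.mul_le_mul_left k t.le_succ).trans_lt hlt
  have hk : k ≤ n / (t + 1) := (Nat.le_div_iff_mul_le t.succ_pos).2 hlt.le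
  have hdvd : t + 1 ∣ n + 1 ↔ n % (t + 1) = t :=
    Nat.dvd_iff_mod_eq_zero.trans Nat.succ_mod_succ_eq_zero_iff
  rw [chi, if_neg hkt.not_gt, if_neg hlt.not_ge]
  split_ifs with hmod
  · rw [Nat.mul_div_assoc 2 (hdvd.2 hmod), Nat.succ_div_of_dvd (hdvd.2 hmod)]
    omega
  · rw [Nat.mul_div_assoc 2 (Nat.dvd_sub_mod n), ← Nat.mul_div_self_eq_mod_sub_self,
      Nat.mul_div_cancel_left _ t.succ_pos, Nat.succ_div_of_not_dvd (mt hdvd.1 hmod)]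
    omega

end

theorem chi_sub_succ_le_general (t k n : ℕ) (hn : k * t ≤ n + 1) :
    chi t (n + (t + 1)) (k + 1) = chi t n k + 1 := by
  have hmul : (k + 1) * t = k * t + t := k.succ_mul t
  have hmul' : (k + 1) * (t + 1) = k * (t + 1) + (t + 1) := k.succ_mul (t + 1)
  rcases le_or_gt n (k * (t + 1)) with hle | hlt
  · have hshift := chi_add_mul_of_le (t := t) (k := k + 1) (n := n + (t + 1))
      (by omega) (by omega)
    have hbase := chi_add_mul_of_le hn hle
    omega
  · have hshift := chi_add_of_lt (t := t) (k := k + 1) (n := n + (t + 1)) (by omega)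
    have hbase := chi_add_of_lt hlt
    have hpos : 0 < t + 1 := t.succ_pos
    rw [Nat.add_right_comm n, Nat.add_div_right n hpos, Nat.add_div_right (n + 1) hpos] at hshift
    omega

/-- `χ_t(n - (t+1), k) ≤ χ_t(n, k+1) - 1` for `t ≥ 2`, `k ≥ 1` and `n ≥ (k+1)t`. -/
theorem chi_sub_succ_le (t k n : ℕ) (ht : 2 ≤ t) (hk : 1 ≤ k) (hn : (k + 1) * t ≤ n) :
    chi t (n - (t + 1)) k ≤ chi t n (k + 1) - 1 := by
  have hkt : t ≤ k * t := Nat.le_mul_of_pos_left t hk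
  obtain ⟨m, rfl⟩ : ∃ m, n = m + (t + 1) := Nat.exists_eq_add_of_le' (by linarith)
  rw [chi_sub_succ_le_general t k m (by linarith), Nat.add_sub_cancel, Nat.add_sub_cancel]
end

section
/- Let t ≥ 2 and k ≥ 1 be integers, let n be an integer with n ≥ kt, and let i be an integer with 1 ≤ i ≤ n − kt + 1. Then χ_t(n − i, k) + χ_t(i − 1, 1) ≤ χ_t(n, k), where by convention χ_t(0, 1) = 0. -/
/-!
Put `g(n) = ⌊n/(t+1)⌋ + ⌊(n+1)/(t+1)⌋`. The cases in the definition of `χ` merge into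
`χ_t(n,k) = min(n - kt, g(n) - k) + 1` for `n ≥ kt - 1`, because `g` grows by at most one per step
and `g(k(t+1)) = 2k`; moreover `χ_t(b,1) = g(b)`. With `n = a + b + 1`, where `b = i - 1`, it
remains to compare the two entries of the minima: `g(b) ≤ b + 1` handles the first, and
`g(a) + g(b) ≤ g(a + b + 1)` the second.
-/

/-- The sum `⌊n/m⌋ + ⌊(n+1)/m⌋`, which for `m = t + 1` governs `χ_t(n,k)` at large `n`. For `m ≥ 2`
it counts the `j ∈ [1, n]` congruent to `0` or `-1` modulo `m`. -/
def divAddSuccDiv (m n : ℕ) : ℕ := n / m + (n + 1) / m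

section divAddSuccDiv

theorem divAddSuccDiv_add_divAddSuccDiv_le (m a b : ℕ) :
    divAddSuccDiv m a + divAddSuccDiv m b ≤ divAddSuccDiv m (a + b + 1) := by
  have h_left : a / m + (b + 1) / m ≤ (a + b + 1) / m := Nat.div_add_div_le_add_div
  have h_right : (a + 1) / m + b / m ≤ (a + b + 1 + 1) / m :=
    Nat.div_add_div_le_add_div.trans (Nat.div_le_div_right (by omega))
  unfold divAddSuccDiv
  omega

variable {m : ℕ}

theorem divAddSuccDiv_succ_le (hm : 2 ≤ m) (n : ℕ) :
    divAddSuccDiv m (n + 1) ≤ divAddSuccDiv m n + 1 := by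
  have h : (n + 1 + 1) / m ≤ n / m + 1 :=
    calc (n + 1 + 1) / m ≤ (n + m) / m := Nat.div_le_div_right (by omega)
      _ = n / m + 1 := Nat.add_div_right n (by omega)
  unfold divAddSuccDiv
  omega

theorem divAddSuccDiv_add_le (hm : 2 ≤ m) (n u : ℕ) :
    divAddSuccDiv m (n + u) ≤ divAddSuccDiv m n + u := by
  induction u with
  | zero => rfl
  | succ u ih => exact (divAddSuccDiv_succ_le hm (n + u)).trans (Nat.succ_le_succ ih)

theorem divAddSuccDiv_le_add_sub (hm : 2 ≤ m) {a b : ℕ} (hab : a ≤ b) :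
    divAddSuccDiv m b ≤ divAddSuccDiv m a + (b - a) := by
  simpa only [Nat.add_sub_cancel' hab] using divAddSuccDiv_add_le hm a (b - a)

theorem divAddSuccDiv_mul_self (hm : 2 ≤ m) (k : ℕ) : divAddSuccDiv m (k * m) = 2 * k := by
  have h : (k * m + 1) / m = k := by
    rw [mul_comm, Nat.mul_add_div (by omega), Nat.div_eq_of_lt hm, add_zero]
  rw [divAddSuccDiv, h, Nat.mul_div_cancel k (by omega), two_mul]

theorem divAddSuccDiv_le_self (hm : 2 ≤ m) (n : ℕ) : divAddSuccDiv m n ≤ n := by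
  simpa [divAddSuccDiv, Nat.div_eq_of_lt hm] using divAddSuccDiv_add_le hm 0 n

theorem divAddSuccDiv_eq_zero {n : ℕ} (hn : n + 1 < m) : divAddSuccDiv m n = 0 := by
  rw [divAddSuccDiv, Nat.div_eq_of_lt hn, Nat.div_eq_of_lt (by omega)]

theorem divAddSuccDiv_add_one_of_dvd {n : ℕ} (h : m ∣ n + 1) :
    divAddSuccDiv m n + 1 = 2 * (n + 1) / m := by
  rw [divAddSuccDiv, Nat.mul_div_assoc 2 h, Nat.succ_div_of_dvd h]
  omega

theorem divAddSuccDiv_of_not_dvd {n : ℕ} (h : ¬ m ∣ n + 1) (hm : 0 < m) :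
    divAddSuccDiv m n = 2 * (n - n % m) / m := by
  rw [divAddSuccDiv, Nat.succ_div_of_not_dvd h, ← Nat.div_mul_self_eq_mod_sub_self, ← mul_assoc,
    Nat.mul_div_cancel _ hm, two_mul]

end divAddSuccDiv

section chi

variable {t n k : ℕ}

theorem chi_add_eq_of_lt (h : k * (t + 1) < n) :
    chi t n k + k = divAddSuccDiv (t + 1) n + 1 := by
  have h_mul : k * (t + 1) = k * t + k := Nat.mul_succ k t
  have h_le : k ≤ divAddSuccDiv (t + 1) n :=
    ((Nat.le_div_iff_mul_le (Nat.succ_pos t)).2 h.le).trans (Nat.le_add_right _ _)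
  rw [chi, if_neg (by omega), if_neg (by omega)]
  simp only [← Nat.succ_mod_succ_eq_zero_iff, ← Nat.dvd_iff_mod_eq_zero]
  split_ifs with h_dvd
  · rw [← divAddSuccDiv_add_one_of_dvd h_dvd]
    omega
  · rw [← divAddSuccDiv_of_not_dvd h_dvd (Nat.succ_pos t)]
    omega

-- `k` stands on the left and `+ 1` inside the minimum because `n - kt` and `g(n) - k` can be `-1`.
theorem chi_add_eq_min (ht : 1 ≤ t) (h : k * t ≤ n + 1) :
    chi t n k + k = min (n + 1 - k * t + k) (divAddSuccDiv (t + 1) n + 1) := by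
  have h_mul : k * (t + 1) = k * t + k := Nat.mul_succ k t
  have h_corner : divAddSuccDiv (t + 1) (k * (t + 1)) = 2 * k :=
    divAddSuccDiv_mul_self (Nat.succ_le_succ ht) k
  rcases lt_or_ge (k * (t + 1)) n with h_lt | h_le
  · have h_growth : divAddSuccDiv (t + 1) n ≤ 2 * k + (n - k * (t + 1)) :=
      h_corner ▸ divAddSuccDiv_le_add_sub (Nat.succ_le_succ ht) h_lt.le
    rw [chi_add_eq_of_lt h_lt]
    omega
  · have h_growth : 2 * k ≤ divAddSuccDiv (t + 1) n + (k * (t + 1) - n) :=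
      h_corner ▸ divAddSuccDiv_le_add_sub (Nat.succ_le_succ ht) h_le
    unfold chi
    split_ifs <;> omega

theorem chi_one_right (ht : 1 ≤ t) (n : ℕ) : chi t n 1 = divAddSuccDiv (t + 1) n := by
  rcases lt_or_ge n t with h_lt | h_ge
  · rw [divAddSuccDiv_eq_zero (by omega), chi, if_pos (by omega)]
  · have h_zero : divAddSuccDiv (t + 1) (t - 1) = 0 := divAddSuccDiv_eq_zero (by omega)
    have h_growth : divAddSuccDiv (t + 1) n ≤ divAddSuccDiv (t + 1) (t - 1) + (n - (t - 1)) :=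
      divAddSuccDiv_le_add_sub (Nat.succ_le_succ ht) (by omega)
    have h_min : chi t n 1 + 1 = min (n + 1 - 1 * t + 1) (divAddSuccDiv (t + 1) n + 1) :=
      chi_add_eq_min ht (by omega)
    omega

theorem chi_subadd_general {a : ℕ} (ht : 1 ≤ t) (ha : k * t ≤ a + 1) (b : ℕ) :
    chi t a k + chi t b 1 ≤ chi t (a + b + 1) k := by
  have h_left : chi t a k + k = min (a + 1 - k * t + k) (divAddSuccDiv (t + 1) a + 1) :=
    chi_add_eq_min ht ha
  have h_right : chi t (a + b + 1) k + k =
      min (a + b + 1 + 1 - k * t + k) (divAddSuccDiv (t + 1) (a + b + 1) + 1) :=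
    chi_add_eq_min ht (by omega)
  have h_super : divAddSuccDiv (t + 1) a + divAddSuccDiv (t + 1) b ≤
      divAddSuccDiv (t + 1) (a + b + 1) :=
    divAddSuccDiv_add_divAddSuccDiv_le (t + 1) a b
  have h_le : divAddSuccDiv (t + 1) b ≤ b := divAddSuccDiv_le_self (Nat.succ_le_succ ht) b
  rw [chi_one_right ht]
  omega

end chi

/-- `χ_t(n - i, k) + χ_t(i - 1, 1) ≤ χ_t(n, k)` for `t ≥ 2`, `k ≥ 1`, `n ≥ kt` and
`1 ≤ i ≤ n - kt + 1` (note `chi t 0 1 = 0`, matching the convention `χ_t(0,1) = 0`). -/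
theorem chi_subadd (t k n i : ℕ) (ht : 2 ≤ t) (hk : 1 ≤ k) (hn : k * t ≤ n)
    (hi1 : 1 ≤ i) (hi : i ≤ n - k * t + 1) :
    chi t (n - i) k + chi t (i - 1) 1 ≤ chi t n k := by
  have hkt : 0 < k * t := Nat.mul_pos hk (by omega)
  simpa only [show n - i + (i - 1) + 1 = n by omega] using
    chi_subadd_general (a := n - i) (by omega) (by omega) (i - 1)
end
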